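/- arXiv:2009.06809 — 3 statements merged into one kernel-verified Lean document; each statement's English description precedes it below -/
import Mathlib

section
/- Let X be a random vector in ℝ^d, d ≥ 1. Then rint C_X ⊆ D(I_X) ⊆ cl C_X, and consequently rint D(I_X) = rint C_X. -/
/-!
The effective domain of the rate function and the convex support are two convex sets with the same
closure, and in finite dimension a convex set has the same relative interior as its closure
(`intrinsicInterior_closure_of_convex`). The equality of the relative interiors follows, and with it
`rint C_X = rint D(I_X) ⊆ D(I_X)`.

Everything about `D(I_X)` goes through a multiplicative criterion (`mem_edom_rateFn_iff`):
`v ∈ D(I_X)` iff `E exp(u·X) ≥ exp(u·v - M)` for all `u`, with some real `M` independent of `u`.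

* `D(I_X)` is convex (`convex_edom_rateFn`), since `u·v` at a convex combination `v` of `v₁, v₂` is
  at most the larger of `u·v₁` and `u·v₂`.
* `D(I_X) ⊆ cl C_X` (`edom_rateFn_subset_closure`): if `u` strictly separates `v` from `cl C_X`, the
  criterion fails along the ray `t u`, `t → ∞`.
* `supp X ⊆ cl D(I_X)` (`msupp_subset_closure_edom`): for `B` a small ball around a point of the
  support, the conditional mean `m = E[X | X ∈ B]` is in `B`, and Jensen's inequality gives
  `E exp(u·X) ≥ P(X ∈ B) exp(u·m)`, so `m ∈ D(I_X)`.
-/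

open MeasureTheory ProbabilityTheory Set Filter Topology
open scoped RealInnerProductSpace ENNReal ProbabilityTheory

noncomputable section

/-- The topological support of a measure on `ℝ^d`: the smallest closed set of full measure,
equivalently the set of points all of whose neighbourhoods have positive measure. -/
def msupp {d : ℕ} (μ : Measure (EuclideanSpace ℝ (Fin d))) : Set (EuclideanSpace ℝ (Fin d)) :=
  {x | ∀ U : Set (EuclideanSpace ℝ (Fin d)), IsOpen U → x ∈ U → 0 < μ U}

/-- The convex support `C_X` of a random vector with law `μ`. -/
def convSupp {d : ℕ} (μ : Measure (EuclideanSpace ℝ (Fin d))) : Set (EuclideanSpace ℝ (Fin d)) :=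
  convexHull ℝ (msupp μ)

/-- The logarithmic Laplace transform `K_X(u) = log E[exp(u·X)]`, with values in `(-∞, +∞]`. -/
def logLaplace {d : ℕ} (μ : Measure (EuclideanSpace ℝ (Fin d)))
    (u : EuclideanSpace ℝ (Fin d)) : EReal :=
  (∫⁻ x, ENNReal.ofReal (Real.exp ⟪u, x⟫) ∂μ).log

/-- The rate function `I_X(v) = sup_u (u·v - K_X(u))`. -/
def rateFn {d : ℕ} (μ : Measure (EuclideanSpace ℝ (Fin d)))
    (v : EuclideanSpace ℝ (Fin d)) : EReal :=
  ⨆ u : EuclideanSpace ℝ (Fin d), ((⟪u, v⟫ : ℝ) : EReal) - logLaplace μ u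

/-- The effective domain of an extended-real-valued function. -/
def edom {α : Type*} (f : α → EReal) : Set α := {x | f x < ⊤}

/-- The affine hyperplane with unit normal `ℓ` and offset `c`. -/
def hyp {d : ℕ} (ℓ : EuclideanSpace ℝ (Fin d)) (c : ℝ) : Set (EuclideanSpace ℝ (Fin d)) :=
  {v | ⟪ℓ, v⟫ = c}

/-- The hyperplane `{v : ℓ·v = c}` supports the convex set `C`: it meets `C` and `C` lies in
one of the two closed half-spaces bounded by it. -/
def SupportsSet {d : ℕ} (ℓ : EuclideanSpace ℝ (Fin d)) (c : ℝ)
    (C : Set (EuclideanSpace ℝ (Fin d))) : Prop :=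
  (hyp ℓ c ∩ C).Nonempty ∧ ((∀ x ∈ C, ⟪ℓ, x⟫ ≤ c) ∨ (∀ x ∈ C, c ≤ ⟪ℓ, x⟫))

/-- Orthogonal projection onto the hyperplane `{v : ℓ·v = c}` (for `‖ℓ‖ = 1`). -/
def projHyp {d : ℕ} (ℓ : EuclideanSpace ℝ (Fin d)) (c : ℝ)
    (v : EuclideanSpace ℝ (Fin d)) : EuclideanSpace ℝ (Fin d) :=
  v + (c - ⟪ℓ, v⟫) • ℓ

/-- A face of a convex set: a convex subset `F ⊆ C` such that any closed segment of `C` having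
a relative interior point in `F` has both endpoints in `F`. -/
def IsFaceOf {V : Type*} [AddCommGroup V] [Module ℝ V] (C F : Set V) : Prop :=
  Convex ℝ F ∧ IsExtreme ℝ C F

/-- A maximal proper face of a convex set: a nonempty proper face contained in no face
other than `C` and itself. -/
def IsMaxProperFace {V : Type*} [AddCommGroup V] [Module ℝ V] (C F : Set V) : Prop :=
  IsFaceOf C F ∧ F.Nonempty ∧ F ≠ C ∧
    ∀ F', IsFaceOf C F' → F'.Nonempty → F ⊆ F' → F' = C ∨ F' = F

/-- `F*₊(C_X)`: the maximal proper faces of the convex support carrying positive probability. -/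
def facesPlus {d : ℕ} (μ : Measure (EuclideanSpace ℝ (Fin d))) :
    Set (Set (EuclideanSpace ℝ (Fin d))) :=
  {C | IsMaxProperFace (convSupp μ) C ∧ 0 < μ C}

/-- `K_X` is steep: `|∇K_X(u_n)| → ∞` along every sequence in the interior of `D(K_X)`
converging to a boundary point of `D(K_X)`. -/
def Steep {d : ℕ} (μ : Measure (EuclideanSpace ℝ (Fin d))) : Prop :=
  ∀ (u : ℕ → EuclideanSpace ℝ (Fin d)) (u₀ : EuclideanSpace ℝ (Fin d)),
    (∀ n, u n ∈ interior (edom (logLaplace μ))) → Tendsto u atTop (𝓝 u₀) →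
    u₀ ∈ frontier (edom (logLaplace μ)) →
    Tendsto (fun n => ‖gradient (fun w => (logLaplace μ w).toReal) (u n)‖) atTop atTop

/-- Condition (a) of the projection property: for every hyperplane `L` supporting `C_X` with
`0 < P(X ∈ L) < 1`, the projections on `L` of the relative interiors of `D(K_X)` and
`D(K_{X|L})` coincide. -/
def CondA {d : ℕ} (μ : Measure (EuclideanSpace ℝ (Fin d))) : Prop :=
  ∀ (ℓ : EuclideanSpace ℝ (Fin d)) (c : ℝ), ‖ℓ‖ = 1 → SupportsSet ℓ c (convSupp μ) →
    0 < μ (hyp ℓ c) → μ (hyp ℓ c) < 1 →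
    projHyp ℓ c '' intrinsicInterior ℝ (edom (logLaplace μ)) =
      projHyp ℓ c '' intrinsicInterior ℝ (edom (logLaplace (μ[|hyp ℓ c])))

/-- Depth-`n` truncation of the (well-founded) recursive definition of the projection property. -/
def ProjPropN {d : ℕ} : ℕ → Measure (EuclideanSpace ℝ (Fin d)) → Prop
  | 0, μ => CondA μ
  | n + 1, μ => CondA μ ∧ ∀ C ∈ facesPlus μ, ProjPropN n (μ[|C])

/-- `K_X` has the projection property: condition (a) holds, and `K_{X|C}` has the projection
property for every `C ∈ F*₊(C_X)`. (The recursion on the dimension of `C_X` terminates in at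
most `d` steps, so this is equivalent to all finite-depth truncations holding.) -/
def ProjProp {d : ℕ} (μ : Measure (EuclideanSpace ℝ (Fin d))) : Prop :=
  ∀ n, ProjPropN n μ

/-- Depth-`n` truncation of the recursive definition of total steepness. -/
def TotallySteepN {d : ℕ} : ℕ → Measure (EuclideanSpace ℝ (Fin d)) → Prop
  | 0, μ => Steep μ
  | n + 1, μ => Steep μ ∧ ∀ C ∈ facesPlus μ, TotallySteepN n (μ[|C])

/-- `K_X` is totally steep: `K_X` is steep and `K_{X|C}` is totally steep for every
`C ∈ F*₊(C_X)`. -/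
def TotallySteep {d : ℕ} (μ : Measure (EuclideanSpace ℝ (Fin d))) : Prop :=
  ∀ n, TotallySteepN n μ

/-- `f` is strictly convex on `A`: `f` is affine on no nondegenerate segment contained in `A`. -/
def StrictlyConvexOnSet {d : ℕ} (f : EuclideanSpace ℝ (Fin d) → EReal)
    (A : Set (EuclideanSpace ℝ (Fin d))) : Prop :=
  ∀ x y : EuclideanSpace ℝ (Fin d), segment ℝ x y ⊆ A → x ≠ y →
    ¬ ∀ t : ℝ, t ∈ Icc (0 : ℝ) 1 →
      f ((1 - t) • x + t • y) = ((1 - t : ℝ) : EReal) * f x + ((t : ℝ) : EReal) * f y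

/-! ### Relative interiors of convex sets -/

lemma intrinsicInterior_eq_interior_of_affineSpan_eq_top {V : Type*} [NormedAddCommGroup V]
    [NormedSpace ℝ V] {s : Set V} (h : affineSpan ℝ s = ⊤) :
    intrinsicInterior ℝ s = interior s := by
  refine Subset.antisymm ?_ interior_subset_intrinsicInterior
  rintro x ⟨y, hy, rfl⟩
  have hopen : IsOpen ((affineSpan ℝ s : AffineSubspace ℝ V) : Set V) := by
    rw [h]; exact isOpen_univ
  have h2 : IsOpen ((↑) '' interior ((↑) ⁻¹' s : Set (affineSpan ℝ s)) : Set V) :=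
    hopen.isOpenMap_subtype_val _ isOpen_interior
  refine interior_maximal ?_ h2 ⟨y, hy, rfl⟩
  rintro _ ⟨z, hz, rfl⟩
  have hz' := interior_subset hz
  exact hz'

/-- The affine hull of the convex set is parametrised isometrically by its direction; there the
set has full affine span, hence nonempty interior, and the statement becomes the one for
ordinary interiors. -/
lemma intrinsicInterior_closure_of_convex {V : Type*} [NormedAddCommGroup V]
    [NormedSpace ℝ V] [FiniteDimensional ℝ V] {s : Set V} (hs : Convex ℝ s) :
    intrinsicInterior ℝ (closure s) = intrinsicInterior ℝ s := by
  rcases s.eq_empty_or_nonempty with rfl | ⟨p, hp⟩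
  · simp
  let W := vectorSpan ℝ s
  let φ : W →ᵃⁱ[ℝ] V :=
    (AffineIsometryEquiv.vaddConst ℝ p).toAffineIsometry.comp W.subtypeₗᵢ.toAffineIsometry
  have hφ : ∀ w : W, φ w = (w : V) + p := fun w => rfl
  have himg : φ '' (φ ⁻¹' s) = s := by
    rw [image_preimage_eq_iff]
    intro x hx
    exact ⟨⟨x - p, vsub_mem_vectorSpan ℝ hx hp⟩, by simp [hφ]⟩
  have hconv : Convex ℝ (φ ⁻¹' s) := hs.affine_preimage φ.toAffineMap
  have hcl : closure s = φ '' closure (φ ⁻¹' s) := by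
    rw [← φ.isometry.isClosedEmbedding.closure_image_eq, himg]
  have htop : affineSpan ℝ (φ ⁻¹' s) = ⊤ := by
    have h0 : (0 : W) ∈ φ ⁻¹' s := by simpa [hφ] using hp
    rw [AffineSubspace.affineSpan_eq_top_iff_vectorSpan_eq_top_of_nonempty ℝ W W ⟨0, h0⟩]
    have h1 : (vectorSpan ℝ (φ ⁻¹' s)).map φ.linear = W := by
      have := AffineMap.map_vectorSpan φ.toAffineMap (s := φ ⁻¹' s)
      have h3 : (⇑φ.toAffineMap) '' (φ ⁻¹' s) = s := himg
      rw [h3] at this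
      exact this
    have h2 : φ.linear = W.subtype := by
      ext w; rfl
    rw [h2] at h1
    rw [eq_top_iff]
    intro w _
    have : (w : V) ∈ (vectorSpan ℝ (φ ⁻¹' s)).map W.subtype := by rw [h1]; exact w.2
    obtain ⟨w', hw', he⟩ := this
    have : w' = w := Subtype.ext he
    exact this ▸ hw'
  have htop' : affineSpan ℝ (closure (φ ⁻¹' s)) = ⊤ :=
    top_le_iff.1 (htop ▸ affineSpan_mono ℝ subset_closure)
  rw [hcl]
  conv_rhs => rw [← himg]
  rw [AffineIsometry.intrinsicInterior_image, AffineIsometry.intrinsicInterior_image,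
    intrinsicInterior_eq_interior_of_affineSpan_eq_top htop,
    intrinsicInterior_eq_interior_of_affineSpan_eq_top htop',
    hconv.interior_closure_eq_interior_of_nonempty_interior
      (hconv.interior_nonempty_iff_affineSpan_eq_top.2 htop)]

/-! ### The effective domain of the rate function -/

/-- Exponentiating `u·v - K_X(u) ≤ M` removes the extended-real arithmetic. -/
lemma mem_edom_rateFn_iff {d : ℕ} {μ : Measure (EuclideanSpace ℝ (Fin d))}
    {v : EuclideanSpace ℝ (Fin d)} :
    v ∈ edom (rateFn μ) ↔ ∃ M : ℝ, ∀ u : EuclideanSpace ℝ (Fin d),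
      ENNReal.ofReal (Real.exp (⟪u, v⟫ - M)) ≤
        ∫⁻ x, ENNReal.ofReal (Real.exp ⟪u, x⟫) ∂μ := by
  have key : ∀ (M : ℝ) (u : EuclideanSpace ℝ (Fin d)),
      ((⟪u, v⟫ : ℝ) : EReal) - logLaplace μ u ≤ M ↔
      ENNReal.ofReal (Real.exp (⟪u, v⟫ - M)) ≤
        ∫⁻ x, ENNReal.ofReal (Real.exp ⟪u, x⟫) ∂μ := by
    intro M u
    rw [← ENNReal.log_le_log_iff, ENNReal.log_ofReal_of_pos (Real.exp_pos _), Real.log_exp,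
      EReal.coe_sub, EReal.sub_le_iff_le_add (.inr (EReal.coe_ne_top M))
        (.inr (EReal.coe_ne_bot M)),
      EReal.sub_le_iff_le_add (.inl (EReal.coe_ne_bot M)) (.inl (EReal.coe_ne_top M)), add_comm]
    rfl
  simp_rw [← key]
  constructor
  · intro h
    obtain ⟨M, hM, -⟩ := EReal.lt_iff_exists_real_btwn.1 (show rateFn μ v < ⊤ from h)
    exact ⟨M, fun u => (le_iSup (fun u => ((⟪u, v⟫ : ℝ) : EReal) - logLaplace μ u) u).trans hM.le⟩
  · rintro ⟨M, hM⟩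
    exact (iSup_le hM).trans_lt (EReal.coe_lt_top M)

lemma convex_edom_rateFn {d : ℕ} (μ : Measure (EuclideanSpace ℝ (Fin d))) :
    Convex ℝ (edom (rateFn μ)) := by
  intro x hx y hy a b ha hb hab
  rw [mem_edom_rateFn_iff] at hx hy ⊢
  obtain ⟨M, hM⟩ := hx
  obtain ⟨N, hN⟩ := hy
  refine ⟨max M N, fun u => ?_⟩
  have hc : ⟪u, a • x + b • y⟫ = a * ⟪u, x⟫ + b * ⟪u, y⟫ := by
    rw [inner_add_right, real_inner_smul_right, real_inner_smul_right]
  have hb' : b = 1 - a := by linarith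
  rcases le_total ⟪u, x⟫ ⟪u, y⟫ with h | h
  · refine le_trans (ENNReal.ofReal_le_ofReal (Real.exp_le_exp.2 ?_)) (hN u)
    rw [hc, hb']
    nlinarith [mul_le_mul_of_nonneg_left h ha, le_max_right M N]
  · refine le_trans (ENNReal.ofReal_le_ofReal (Real.exp_le_exp.2 ?_)) (hM u)
    rw [hc, hb']
    rw [hb'] at hb
    nlinarith [mul_le_mul_of_nonneg_left h hb, le_max_left M N]

lemma ae_mem_msupp {d : ℕ} (μ : Measure (EuclideanSpace ℝ (Fin d))) : ∀ᵐ x ∂μ, x ∈ msupp μ := by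
  filter_upwards [Measure.support_mem_ae (μ := μ)] with x hx U hU hxU
  exact (Measure.mem_support_iff_forall x).1 hx U (hU.mem_nhds hxU)

lemma edom_rateFn_subset_closure {d : ℕ} (μ : Measure (EuclideanSpace ℝ (Fin d)))
    [IsProbabilityMeasure μ] : edom (rateFn μ) ⊆ closure (convSupp μ) := by
  intro v hv
  by_contra hvC
  obtain ⟨M, hM⟩ := mem_edom_rateFn_iff.1 hv
  obtain ⟨f, s, hs, hsv⟩ := geometric_hahn_banach_closed_point
    (convex_convexHull ℝ (msupp μ)).closure isClosed_closure hvC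
  let w := (InnerProductSpace.toDual ℝ (EuclideanSpace ℝ (Fin d))).symm f
  have hw : ∀ x, ⟪w, x⟫ = f x := fun x => InnerProductSpace.toDual_symm_apply
  -- For this `t`, the criterion at `t • w` would give `exp (t s + 1) ≤ exp (t s)`.
  let t := (|M| + 1) / (f v - s)
  have hpos : 0 < f v - s := sub_pos.2 hsv
  have ht : 0 ≤ t := by positivity
  have htm : t * (f v - s) = |M| + 1 := div_mul_cancel₀ _ hpos.ne'
  have hle : ∫⁻ x, ENNReal.ofReal (Real.exp ⟪t • w, x⟫) ∂μ ≤ ENNReal.ofReal (Real.exp (t * s)) := by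
    calc ∫⁻ x, ENNReal.ofReal (Real.exp ⟪t • w, x⟫) ∂μ
        ≤ ∫⁻ _, ENNReal.ofReal (Real.exp (t * s)) ∂μ := by
          refine lintegral_mono_ae ?_
          filter_upwards [ae_mem_msupp μ] with x hx
          refine ENNReal.ofReal_le_ofReal (Real.exp_le_exp.2 ?_)
          rw [real_inner_smul_left, hw]
          exact mul_le_mul_of_nonneg_left
            (hs x (subset_closure (subset_convexHull ℝ _ hx))).le ht
      _ = ENNReal.ofReal (Real.exp (t * s)) := by simp
  have h := (hM (t • w)).trans hle
  rw [ENNReal.ofReal_le_ofReal_iff (Real.exp_pos _).le, Real.exp_le_exp, real_inner_smul_left,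
    hw] at h
  nlinarith [le_abs_self M]

lemma msupp_subset_closure_edom {d : ℕ} (μ : Measure (EuclideanSpace ℝ (Fin d)))
    [IsProbabilityMeasure μ] : msupp μ ⊆ closure (edom (rateFn μ)) := by
  intro x hx
  rw [Metric.mem_closure_iff]
  intro ε hε
  let B := Metric.closedBall x (ε / 2)
  have hBm : MeasurableSet B := Metric.isClosed_closedBall.measurableSet
  have hBc : IsCompact B := isCompact_closedBall x (ε / 2)
  have hB : 0 < μ B := (hx _ Metric.isOpen_ball (Metric.mem_ball_self (half_pos hε))).trans_le
    (measure_mono Metric.ball_subset_closedBall)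
  have hBr : 0 < μ.real B := ENNReal.toReal_pos hB.ne' (measure_ne_top μ B)
  have hid : IntegrableOn (fun y : EuclideanSpace ℝ (Fin d) => y) B μ :=
    continuous_id.continuousOn.integrableOn_compact hBc
  let m := ⨍ y in B, y ∂μ
  have hmB : m ∈ B := (convex_closedBall x (ε / 2)).set_average_mem Metric.isClosed_closedBall
    hB.ne' (measure_ne_top μ B) (ae_restrict_mem hBm) hid
  refine ⟨m, mem_edom_rateFn_iff.2 ⟨-Real.log (μ.real B), fun u => ?_⟩, ?_⟩
  · have hinn : IntegrableOn (fun y => ⟪u, y⟫) B μ :=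
      (by fun_prop : Continuous fun y : EuclideanSpace ℝ (Fin d) => ⟪u, y⟫).continuousOn
        |>.integrableOn_compact hBc
    have hexp : IntegrableOn (fun y => Real.exp ⟪u, y⟫) B μ :=
      (by fun_prop : Continuous fun y : EuclideanSpace ℝ (Fin d) => Real.exp ⟪u, y⟫).continuousOn
        |>.integrableOn_compact hBc
    have hJ := convexOn_exp.map_set_average_le Real.continuous_exp.continuousOn isClosed_univ
      hB.ne' (measure_ne_top μ B) (by simp) hinn hexp
    have hm : ⨍ y in B, ⟪u, y⟫ ∂μ = ⟪u, m⟫ := by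
      simp only [m]
      rw [setAverage_eq, setAverage_eq, real_inner_smul_right, smul_eq_mul, integral_inner hid]
    rw [hm, setAverage_eq, smul_eq_mul, inv_mul_eq_div, le_div_iff₀ hBr] at hJ
    calc ENNReal.ofReal (Real.exp (⟪u, m⟫ - -Real.log (μ.real B)))
        ≤ ENNReal.ofReal (∫ y in B, Real.exp ⟪u, y⟫ ∂μ) := by
          refine ENNReal.ofReal_le_ofReal ?_
          rwa [sub_neg_eq_add, Real.exp_add, Real.exp_log hBr]
      _ = ∫⁻ y in B, ENNReal.ofReal (Real.exp ⟪u, y⟫) ∂μ :=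
          ofReal_integral_eq_lintegral_ofReal hexp (ae_of_all _ fun y => (Real.exp_pos _).le)
      _ ≤ ∫⁻ y, ENNReal.ofReal (Real.exp ⟪u, y⟫) ∂μ := setLIntegral_le_lintegral _ _
  · have : dist m x ≤ ε / 2 := hmB
    rw [dist_comm]
    linarith

lemma closure_edom_rateFn {d : ℕ} (μ : Measure (EuclideanSpace ℝ (Fin d)))
    [IsProbabilityMeasure μ] : closure (edom (rateFn μ)) = closure (convSupp μ) :=
  (closure_minimal (edom_rateFn_subset_closure μ) isClosed_closure).antisymm <|
    closure_minimal (convexHull_min (msupp_subset_closure_edom μ) (convex_edom_rateFn μ).closure)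
      isClosed_closure

/-- **Proposition 1(1), inclusions.** For a random vector `X` in `ℝ^d`, `d ≥ 1`, with law `μ`:
`rint C_X ⊆ D(I_X) ⊆ cl C_X`, hence `rint D(I_X) = rint C_X`. -/
theorem rint_convSupp_subset_edom_rateFn {d : ℕ} (hd : 1 ≤ d)
    (μ : Measure (EuclideanSpace ℝ (Fin d))) [IsProbabilityMeasure μ] :
    intrinsicInterior ℝ (convSupp μ) ⊆ edom (rateFn μ) ∧
    edom (rateFn μ) ⊆ closure (convSupp μ) ∧
    intrinsicInterior ℝ (edom (rateFn μ)) = intrinsicInterior ℝ (convSupp μ) := by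
  have h : intrinsicInterior ℝ (edom (rateFn μ)) = intrinsicInterior ℝ (convSupp μ) := by
    rw [← intrinsicInterior_closure_of_convex (convex_edom_rateFn μ), closure_edom_rateFn]
    exact intrinsicInterior_closure_of_convex (convex_convexHull ℝ _)
  exact ⟨h ▸ intrinsicInterior_subset, edom_rateFn_subset_closure μ, h⟩

end
end

section
/- Let X be a random vector in ℝ^d, d ≥ 1, and let L be an affine hyperplane in ℝ^d that supports cl C_X and satisfies P(X ∈ L) = 0. Then I_X(v) = +∞ for every v ∈ L. -/
/-!
Almost surely `X` lies in `cl C_X`, hence in one closed half-space bounded by `L`; since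
`P(X ∈ L) = 0`, it lies almost surely in the open half-space (`ae_mem_msupp`). After possibly
replacing the normal `ℓ` by `-ℓ`, this says `ℓ·X < c` almost surely. For `v ∈ L` the points
`u = nℓ` give `u·v - K_X(u) = -log E[exp(n(ℓ·X - c))]`, and the expectation tends to `0` by
dominated convergence, so the supremum is infinite (`rateFn_eq_top_of_ae_lt`).
-/

open MeasureTheory ProbabilityTheory Set Filter Topology
open scoped RealInnerProductSpace ENNReal ProbabilityTheory

noncomputable section

/-- Exponential Chebyshev in the limit: if `ℓ·X < ℓ·v` almost surely, then testing the supremum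
defining the rate function at `u = nℓ` gives `-log E[exp(n(ℓ·X - ℓ·v))]`, which is unbounded
because the expectation tends to `0` by dominated convergence. -/
lemma rateFn_eq_top_of_ae_lt {d : ℕ} (μ : Measure (EuclideanSpace ℝ (Fin d)))
    [IsProbabilityMeasure μ] (ℓ v : EuclideanSpace ℝ (Fin d))
    (h : ∀ᵐ x ∂μ, ⟪ℓ, x⟫ < ⟪ℓ, v⟫) : rateFn μ v = ⊤ := by
  have hlim : Tendsto (fun n : ℕ => ∫⁻ x, ENNReal.ofReal (Real.exp (n * (⟪ℓ, x⟫ - ⟪ℓ, v⟫))) ∂μ)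
      atTop (𝓝 (∫⁻ _, 0 ∂μ)) := by
    refine tendsto_lintegral_of_dominated_convergence (fun _ => 1) (fun n => ?_) (fun n => ?_)
      (by simp) ?_
    · fun_prop
    · filter_upwards [h] with x hx
      rw [ENNReal.ofReal_le_one, Real.exp_le_one_iff]
      exact mul_nonpos_of_nonneg_of_nonpos n.cast_nonneg (by linarith)
    · filter_upwards [h] with x hx
      rw [← ENNReal.ofReal_zero]
      refine ENNReal.tendsto_ofReal (Real.tendsto_exp_atBot.comp ?_)
      exact tendsto_natCast_atTop_atTop.atTop_mul_const_of_neg (by linarith)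
  rw [lintegral_zero] at hlim
  rw [EReal.eq_top_iff_forall_lt]
  intro M
  have hpos : (0 : ℝ≥0∞) < ENNReal.ofReal (Real.exp (-(M + 1))) :=
    ENNReal.ofReal_pos.2 (Real.exp_pos _)
  obtain ⟨n, hn⟩ := (hlim.eventually_lt_const hpos).exists
  have hint : ∫⁻ x, ENNReal.ofReal (Real.exp ⟪(n : ℝ) • ℓ, x⟫) ∂μ ≤
      ENNReal.ofReal (Real.exp (n * ⟪ℓ, v⟫ - (M + 1))) := by
    calc ∫⁻ x, ENNReal.ofReal (Real.exp ⟪(n : ℝ) • ℓ, x⟫) ∂μ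
        = ∫⁻ x, ENNReal.ofReal (Real.exp (n * ⟪ℓ, v⟫)) *
            ENNReal.ofReal (Real.exp (n * (⟪ℓ, x⟫ - ⟪ℓ, v⟫))) ∂μ := by
          refine lintegral_congr fun x => ?_
          rw [← ENNReal.ofReal_mul (Real.exp_pos _).le, ← Real.exp_add, real_inner_smul_left]
          ring_nf
      _ = ENNReal.ofReal (Real.exp (n * ⟪ℓ, v⟫)) *
            ∫⁻ x, ENNReal.ofReal (Real.exp (n * (⟪ℓ, x⟫ - ⟪ℓ, v⟫))) ∂μ :=
          lintegral_const_mul _ (by fun_prop)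
      _ ≤ ENNReal.ofReal (Real.exp (n * ⟪ℓ, v⟫)) * ENNReal.ofReal (Real.exp (-(M + 1))) := by
          gcongr
      _ = ENNReal.ofReal (Real.exp (n * ⟪ℓ, v⟫ - (M + 1))) := by
          rw [← ENNReal.ofReal_mul (Real.exp_pos _).le, ← Real.exp_add, sub_eq_add_neg]
  have hlog : logLaplace μ ((n : ℝ) • ℓ) ≤ ((n * ⟪ℓ, v⟫ - (M + 1) : ℝ) : EReal) := by
    refine (ENNReal.log_monotone hint).trans_eq ?_
    rw [ENNReal.log_ofReal_of_pos (Real.exp_pos _), Real.log_exp]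
  calc (M : EReal) < ((M + 1 : ℝ) : EReal) := by exact_mod_cast lt_add_one M
    _ = ((⟪(n : ℝ) • ℓ, v⟫ : ℝ) : EReal) - ((n * ⟪ℓ, v⟫ - (M + 1) : ℝ) : EReal) := by
        rw [← EReal.coe_sub, real_inner_smul_left]
        ring_nf
    _ ≤ ((⟪(n : ℝ) • ℓ, v⟫ : ℝ) : EReal) - logLaplace μ ((n : ℝ) • ℓ) :=
        EReal.sub_le_sub le_rfl hlog
    _ ≤ rateFn μ v :=
        le_iSup (fun u => ((⟪u, v⟫ : ℝ) : EReal) - logLaplace μ u) ((n : ℝ) • ℓ)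

/-- **Proposition 1(1), last claim.** If the hyperplane `L = {v : ℓ·v = c}` supports `cl C_X`
and `P(X ∈ L) = 0`, then `I_X = +∞` on `L`. -/
theorem rateFn_eq_top_on_null_supporting_hyperplane {d : ℕ} (hd : 1 ≤ d)
    (μ : Measure (EuclideanSpace ℝ (Fin d))) [IsProbabilityMeasure μ]
    (ℓ : EuclideanSpace ℝ (Fin d)) (c : ℝ) (hℓ : ℓ ≠ 0)
    (hsupp : SupportsSet ℓ c (closure (convSupp μ)))
    (hnull : μ (hyp ℓ c) = 0) :
    ∀ v ∈ hyp ℓ c, rateFn μ v = ⊤ := by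
  intro v hv
  have hv' : ⟪ℓ, v⟫ = c := hv
  have hne : ∀ᵐ x ∂μ, ⟪ℓ, x⟫ ≠ c := measure_eq_zero_iff_ae_notMem.1 hnull
  have hmem : ∀ᵐ x ∂μ, x ∈ closure (convSupp μ) :=
    (ae_mem_msupp μ).mono fun x hx => subset_closure (subset_convexHull ℝ _ hx)
  rcases hsupp.2 with h | h
  · refine rateFn_eq_top_of_ae_lt μ ℓ v ?_
    filter_upwards [hne, hmem] with x hx hxC
    exact hv' ▸ lt_of_le_of_ne (h x hxC) hx
  · refine rateFn_eq_top_of_ae_lt μ (-ℓ) v ?_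
    filter_upwards [hne, hmem] with x hx hxC
    rw [inner_neg_left, inner_neg_left, hv', neg_lt_neg_iff]
    exact lt_of_le_of_ne (h x hxC) (Ne.symm hx)

end
end

section
/- Let X be a random vector in ℝ^d, d ≥ 1. Then I_X is strictly convex on rint D(I_X) if and only if int D(K_X) ≠ ∅ and K_X is steep. -/
/-!
Write `D = D(K)`, and call `v` a subgradient of `K` at `u ∈ D` if
`K u + ⟪w - u, v⟫ ≤ K w` for all `w ∈ D`. For a subgradient, `I v = ⟪u, v⟫ - K u`
(`rateFn_eq_of_subgradient`), so `I` is affine on any segment consisting of subgradients of `K`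
at one point `u`. The theorem says that this happens inside `rint D(I)` exactly when `D` has empty
interior or `K` fails to be steep.

*Steepness implies strict convexity.* Suppose `I` is affine on a segment `[x, y] ⊆ rint D(I)` and
let `z` be its midpoint. Separating `(z, I z)` from the epigraph of `I` gives a subgradient `u` of
`I` at `z` (`exists_subgradient_rateFn`). Restricting the law to balls yields `K ≤ I*`, the conjugate of `I`
(`cumulant_le_of_forall`), hence `u ∈ D` and both `x` and `y` are subgradients of `K` at `u`.
A steep `K` has no subgradient at boundary points (`mem_interior_of_subgradient`), because a
subgradient there would keep the gradients bounded along a segment towards an interior point.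
So `u ∈ int D`, where `K` is differentiable (`hasGradientAt_cumulant`), and `x = ∇K(u) = y`.

*Strict convexity implies steepness.* If `int D = ∅`, then `D`, which contains `0`, lies in a
hyperplane `l^⊥`, and `I` is constant in the direction `l`. If `int D ≠ ∅` and `K` is not steep, some
bounded sequence of gradients at points tending to a boundary point `u` has a limit `v`. By lower
semicontinuity (`cumulant_lsc`), `u ∈ D` and `v` is a subgradient at `u`. Fatou's lemma then shows
that the law tilted by `u` has a finite mean `m` (`integrable_exp_smul_of_subgradient`). This mean
is again a subgradient at `u` by Jensen's inequality, and, unlike `v`, it is known to lie in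
`rint D(I)` (`tiltedMean_mem_rint`). Adding to `m` an outer normal `l` of `D` at `u` gives further
subgradients, so `I` is affine on the ray `m + t l`, `t ≥ 0`, an initial piece of which lies in
`rint D(I)` (`not_strictlyConvexOnSet_of_ray`).
-/

open MeasureTheory ProbabilityTheory Set Filter Topology
open scoped RealInnerProductSpace ENNReal ProbabilityTheory

noncomputable section

/-! ### Relative interiors and supporting functionals -/

section ConvexGeometry
variable {F : Type*} [NormedAddCommGroup F] [NormedSpace ℝ F]

theorem mem_rint_iff {C : Set F} {x : F} :
    x ∈ intrinsicInterior ℝ C ↔ x ∈ affineSpan ℝ C ∧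
      ∃ ε > 0, ∀ z ∈ affineSpan ℝ C, dist z x < ε → z ∈ C := by
  rw [mem_intrinsicInterior]
  constructor
  · rintro ⟨y, hy, rfl⟩
    refine ⟨y.2, ?_⟩
    rw [mem_interior_iff_mem_nhds, Metric.mem_nhds_iff] at hy
    obtain ⟨ε, hε, h⟩ := hy
    exact ⟨ε, hε, fun z hz hd => h (show (⟨z, hz⟩ : affineSpan ℝ C) ∈ Metric.ball y ε from hd)⟩
  · rintro ⟨hx, ε, hε, h⟩
    refine ⟨⟨x, hx⟩, ?_, rfl⟩
    rw [mem_interior_iff_mem_nhds, Metric.mem_nhds_iff]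
    exact ⟨ε, hε, fun z hz => h z z.2 hz⟩

/-- A segment from a point of `C` to a relative interior point can be prolonged inside `C`. -/
theorem exists_prolong_of_mem_rint {C : Set F} {x y : F} (hx : x ∈ intrinsicInterior ℝ C)
    (hy : y ∈ C) : ∃ ε > (0 : ℝ), x + ε • (x - y) ∈ C := by
  obtain ⟨hxs, ε, hε, h⟩ := mem_rint_iff.1 hx
  have hpos : 0 < ‖x - y‖ + 1 := by positivity
  refine ⟨ε / (‖x - y‖ + 1), by positivity, h _ ?_ ?_⟩
  · have := AffineMap.lineMap_mem (-(ε / (‖x - y‖ + 1))) hxs (subset_affineSpan ℝ C hy)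
    convert this using 1
    rw [AffineMap.lineMap_apply_module']
    module
  · rw [dist_eq_norm, add_sub_cancel_left, norm_smul, Real.norm_of_nonneg (by positivity),
      div_mul_eq_mul_div, div_lt_iff₀ hpos]
    nlinarith [norm_nonneg (x - y)]

/-- A linear functional attaining its maximum over `C` at a relative interior point is constant on
`C`. -/
theorem eq_of_le_of_mem_rint {C : Set F} {x y : F} (hx : x ∈ intrinsicInterior ℝ C)
    (f : F →L[ℝ] ℝ) (hf : ∀ z ∈ C, f z ≤ f x) (hy : y ∈ C) : f y = f x := by
  obtain ⟨ε, hε, h⟩ := exists_prolong_of_mem_rint hx hy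
  have h1 := hf _ h
  have h2 := hf _ hy
  simp only [map_add, map_smul, map_sub, smul_eq_mul] at h1
  nlinarith

theorem exists_support_of_notMem_interior {C : Set F} (hC : Convex ℝ C) (hne : (interior C).Nonempty)
    {x : F} (hx : x ∉ interior C) :
    ∃ f : F →L[ℝ] ℝ, (∀ y ∈ C, f y ≤ f x) ∧ ∀ y ∈ interior C, f y < f x := by
  obtain ⟨f, hf⟩ := geometric_hahn_banach_open_point hC.interior isOpen_interior hx
  refine ⟨f, fun y hy => ?_, hf⟩
  have hy' : y ∈ closure (interior C) := by
    rw [hC.closure_interior_eq_closure_of_nonempty_interior hne]; exact subset_closure hy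
  exact closure_minimal (fun z hz => (hf z hz).le)
    (isClosed_le f.continuous continuous_const) hy'

/-- A point of a convex set outside its relative interior has a supporting functional that is not
constant on the set. The functional is found in the direction space of the affine span, where the
set has nonempty interior, and then extended through a projection. -/
theorem exists_proper_support [FiniteDimensional ℝ F] {C : Set F} (hC : Convex ℝ C) {x : F}
    (hxC : x ∈ C) (hx : x ∉ intrinsicInterior ℝ C) :
    ∃ f : F →L[ℝ] ℝ, (∀ y ∈ C, f y ≤ f x) ∧ ∃ y ∈ C, f y < f x := by
  have hxs := subset_affineSpan ℝ C hxC
  set W := (affineSpan ℝ C).direction with hW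
  set C' : Set W := {w | x + w ∈ C} with hC'
  have hmem : ∀ z ∈ affineSpan ℝ C, z - x ∈ W := fun z hz =>
    AffineSubspace.vsub_mem_direction hz hxs
  have hmem' : ∀ w : W, x + (w : F) ∈ affineSpan ℝ C := fun w => by
    rw [add_comm]; exact AffineSubspace.vadd_mem_of_mem_direction w.2 hxs
  have key : ∀ w : W, w ∈ interior C' ↔ x + (w : F) ∈ intrinsicInterior ℝ C := by
    intro w
    rw [mem_rint_iff, mem_interior_iff_mem_nhds, Metric.mem_nhds_iff]
    constructor
    · rintro ⟨ε, hε, h⟩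
      refine ⟨hmem' w, ε, hε, fun z hz hd => ?_⟩
      have : (⟨z - x, hmem z hz⟩ : W) ∈ Metric.ball w ε := by
        rw [Metric.mem_ball, Subtype.dist_eq, dist_eq_norm]
        rw [dist_eq_norm] at hd
        convert hd using 2
        simp only; abel
      have := h this
      simpa [hC'] using this
    · rintro ⟨-, ε, hε, h⟩
      refine ⟨ε, hε, fun z hz => h _ (hmem' z) ?_⟩
      simpa [Subtype.dist_eq] using hz
  have hconv : Convex ℝ C' := by
    intro a ha b hb s t hs ht hst
    have := hC ha hb hs ht hst
    change x + ((s • a + t • b : W) : F) ∈ C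
    convert this using 1
    push_cast
    calc x + (s • (a : F) + t • (b : F)) = (s + t) • x + (s • (a : F) + t • (b : F)) := by
          rw [hst, one_smul]
      _ = _ := by module
  obtain ⟨p, hp⟩ := Set.Nonempty.intrinsicInterior hC ⟨x, hxC⟩
  have hpC := intrinsicInterior_subset hp
  have hpW := hmem p (subset_affineSpan ℝ C hpC)
  have hp' : (⟨p - x, hpW⟩ : W) ∈ interior C' := by
    rw [key]; simpa using hp
  have h0 : (0 : W) ∉ interior C' := by rw [key]; simpa using hx
  obtain ⟨f, hf, hf'⟩ := exists_support_of_notMem_interior hconv ⟨_, hp'⟩ h0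
  obtain ⟨g, hg⟩ := Submodule.ClosedComplemented.of_finiteDimensional W
  have hfg : ∀ y (hy : y ∈ C), f (g y) = f (g x) + f ⟨y - x, hmem y (subset_affineSpan ℝ C hy)⟩ := by
    intro y hy
    rw [← hg ⟨y - x, hmem y (subset_affineSpan ℝ C hy)⟩]
    simp
  refine ⟨f.comp g, fun y hy => ?_, p, hpC, ?_⟩
  · have := hf ⟨y - x, hmem y (subset_affineSpan ℝ C hy)⟩ (by simpa [hC'] using hy)
    simp only [ContinuousLinearMap.comp_apply, hfg y hy]
    simp only [map_zero] at this; linarith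
  · have := hf' _ hp'
    simp only [ContinuousLinearMap.comp_apply, hfg p hpC]
    simp only [map_zero] at this; linarith

/-- The first half of the segment from a relative interior point `x` to a point `x + 2 l` of `C` lies
in the relative interior. -/
theorem add_smul_mem_rint [FiniteDimensional ℝ F] {C : Set F} (hC : Convex ℝ C) {x l : F}
    (hx : x ∈ intrinsicInterior ℝ C) (hl : x + (2 : ℝ) • l ∈ C) {t : ℝ} (ht : t ∈ Icc (0 : ℝ) 1) :
    x + t • l ∈ intrinsicInterior ℝ C := by
  by_contra hcon
  have hxC := intrinsicInterior_subset hx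
  have hmem : x + t • l ∈ C := by
    have := hC hxC hl (a := 1 - t / 2) (b := t / 2) (by linarith [ht.2]) (by linarith [ht.1])
      (by ring)
    convert this using 1
    module
  obtain ⟨f, hf, y, hy, hlt⟩ := exists_proper_support hC hmem hcon
  have h1 := hf _ hxC
  have h2 := hf _ hl
  simp only [map_add, map_smul, smul_eq_mul] at h1 h2 hf hlt
  have h3 : t * f l = 0 := by
    rcases ht.1.eq_or_lt with h | h
    · simp [← h]
    · have h4 : 0 ≤ f l := by nlinarith
      have h5 : f l ≤ 0 := by nlinarith [ht.2]
      rw [le_antisymm h5 h4, mul_zero]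
  have := eq_of_le_of_mem_rint hx f (fun z hz => by linarith [hf z hz]) hy
  linarith
end ConvexGeometry

/-! ### The logarithmic Laplace transform and the rate function as real functions -/

/-- The effective domain of `K`, as the set of `u` for which `exp ⟪u, x⟫` is integrable. -/
def expDom {d : ℕ} (μ : Measure (EuclideanSpace ℝ (Fin d))) : Set (EuclideanSpace ℝ (Fin d)) :=
  {u | Integrable (fun x => Real.exp ⟪u, x⟫) μ}

/-- The real-valued version of `K`. Off `expDom μ` the integral is `0` by convention, so the value is
`log 0 = 0`, which agrees with `(⊤ : EReal).toReal`. -/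
def cumulant {d : ℕ} (μ : Measure (EuclideanSpace ℝ (Fin d))) (u : EuclideanSpace ℝ (Fin d)) : ℝ :=
  Real.log (∫ x, Real.exp ⟪u, x⟫ ∂μ)

/-- The mean of the law with density proportional to `exp ⟪u, x⟫` with respect to `μ`. It is meaningful
when both `exp ⟪u, x⟫` and `exp ⟪u, x⟫ • x` are integrable. -/
def tiltedMean {d : ℕ} (μ : Measure (EuclideanSpace ℝ (Fin d))) (u : EuclideanSpace ℝ (Fin d)) :
    EuclideanSpace ℝ (Fin d) :=
  (∫ x, Real.exp ⟪u, x⟫ ∂μ)⁻¹ • ∫ x, Real.exp ⟪u, x⟫ • x ∂μ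

section Laplace
variable {d : ℕ} {μ : Measure (EuclideanSpace ℝ (Fin d))}

theorem measurable_exp_inner (u : EuclideanSpace ℝ (Fin d)) :
    Measurable fun x : EuclideanSpace ℝ (Fin d) => Real.exp ⟪u, x⟫ := by
  fun_prop

theorem integral_exp_inner_pos [NeZero μ] {u : EuclideanSpace ℝ (Fin d)} (hu : u ∈ expDom μ) :
    0 < ∫ x, Real.exp ⟪u, x⟫ ∂μ := integral_exp_pos hu

theorem mem_expDom_iff {u : EuclideanSpace ℝ (Fin d)} :
    u ∈ expDom μ ↔ ∫⁻ x, ENNReal.ofReal (Real.exp ⟪u, x⟫) ∂μ < ⊤ := by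
  change Integrable _ μ ↔ _
  rw [Integrable, hasFiniteIntegral_iff_ofReal (Eventually.of_forall fun x => (Real.exp_pos _).le)]
  exact and_iff_right (measurable_exp_inner u).aestronglyMeasurable

theorem edom_logLaplace : edom (logLaplace μ) = expDom μ := by
  ext u
  rw [mem_expDom_iff]
  exact ENNReal.log_lt_top_iff

theorem logLaplace_eq_coe [NeZero μ] {u : EuclideanSpace ℝ (Fin d)} (hu : u ∈ expDom μ) :
    logLaplace μ u = (cumulant μ u : EReal) := by
  rw [logLaplace, ← ofReal_integral_eq_lintegral_ofReal hu
    (Eventually.of_forall fun x => (Real.exp_pos _).le),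
    ENNReal.log_ofReal_of_pos (integral_exp_inner_pos hu), cumulant]

theorem logLaplace_eq_top {u : EuclideanSpace ℝ (Fin d)} (hu : u ∉ expDom μ) :
    logLaplace μ u = ⊤ := by
  rw [mem_expDom_iff, not_lt, top_le_iff] at hu
  rw [logLaplace, hu, ENNReal.log_top]

theorem toReal_logLaplace [NeZero μ] :
    (fun u => (logLaplace μ u).toReal) = cumulant μ := by
  funext u
  by_cases hu : u ∈ expDom μ
  · rw [logLaplace_eq_coe hu, EReal.toReal_coe]
  · rw [logLaplace_eq_top hu, EReal.toReal_top, cumulant, integral_undef hu, Real.log_zero]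

theorem rateFn_le_iff [NeZero μ] {v : EuclideanSpace ℝ (Fin d)} {c : ℝ} :
    rateFn μ v ≤ (c : EReal) ↔ ∀ u ∈ expDom μ, ⟪u, v⟫ - cumulant μ u ≤ c := by
  rw [rateFn, iSup_le_iff]
  refine forall_congr' fun u => ?_
  by_cases hu : u ∈ expDom μ
  · rw [logLaplace_eq_coe hu, ← EReal.coe_sub, EReal.coe_le_coe_iff]
    simp [hu]
  · simp [hu, logLaplace_eq_top hu]

theorem zero_mem_expDom [IsProbabilityMeasure μ] : (0 : EuclideanSpace ℝ (Fin d)) ∈ expDom μ := by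
  change Integrable _ μ
  simp

theorem rateFn_nonneg [IsProbabilityMeasure μ] (v : EuclideanSpace ℝ (Fin d)) :
    0 ≤ rateFn μ v := by
  refine le_trans ?_ (le_iSup _ (0 : EuclideanSpace ℝ (Fin d)))
  simp [logLaplace]

theorem coe_toReal_rateFn [IsProbabilityMeasure μ] {v : EuclideanSpace ℝ (Fin d)}
    (hv : v ∈ edom (rateFn μ)) : ((rateFn μ v).toReal : EReal) = rateFn μ v :=
  EReal.coe_toReal (ne_of_lt hv) (ne_of_gt (lt_of_lt_of_le EReal.bot_lt_zero (rateFn_nonneg v)))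

theorem mem_edom_of_rateFn_le {v : EuclideanSpace ℝ (Fin d)} {c : ℝ}
    (h : rateFn μ v ≤ (c : EReal)) : v ∈ edom (rateFn μ) :=
  lt_of_le_of_lt h (EReal.coe_lt_top c)

theorem inner_sub_cumulant_le [IsProbabilityMeasure μ] {v u : EuclideanSpace ℝ (Fin d)}
    (hv : v ∈ edom (rateFn μ)) (hu : u ∈ expDom μ) :
    ⟪u, v⟫ - cumulant μ u ≤ (rateFn μ v).toReal :=
  rateFn_le_iff.1 (coe_toReal_rateFn hv).ge u hu

theorem toReal_rateFn_le [IsProbabilityMeasure μ] {v : EuclideanSpace ℝ (Fin d)} {c : ℝ}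
    (h : ∀ u ∈ expDom μ, ⟪u, v⟫ - cumulant μ u ≤ c) : (rateFn μ v).toReal ≤ c := by
  have h' := rateFn_le_iff.2 h
  rw [← coe_toReal_rateFn (mem_edom_of_rateFn_le h')] at h'
  exact_mod_cast h'

theorem convex_expDom : Convex ℝ (expDom μ) := by
  intro u hu w hw a b ha hb hab
  refine ((hu.const_mul a).add (hw.const_mul b)).mono'
    (measurable_exp_inner _).aestronglyMeasurable (Eventually.of_forall fun x => ?_)
  have := convexOn_exp.2 (mem_univ ⟪u, x⟫) (mem_univ ⟪w, x⟫) ha hb hab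
  rw [Real.norm_of_nonneg (Real.exp_pos _).le, inner_add_left, real_inner_smul_left,
    real_inner_smul_left]
  simpa using this

/-- Convexity of the rate function, phrased through real upper bounds for its values. -/
theorem rate_combo_le [IsProbabilityMeasure μ] {v w : EuclideanSpace ℝ (Fin d)}
    {r s a b : ℝ} (hv : rateFn μ v ≤ (r : EReal))
    (hw : rateFn μ w ≤ (s : EReal)) (ha : 0 ≤ a) (hb : 0 ≤ b) (hab : a + b = 1) :
    rateFn μ (a • v + b • w) ≤ ((a * r + b * s : ℝ) : EReal) := by
  rw [rateFn_le_iff] at *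
  intro u hu
  have h1 := mul_le_mul_of_nonneg_left (hv u hu) ha
  have h2 := mul_le_mul_of_nonneg_left (hw u hu) hb
  rw [inner_add_right, real_inner_smul_right, real_inner_smul_right]
  have : cumulant μ u = a * cumulant μ u + b * cumulant μ u := by rw [← add_mul, hab, one_mul]
  linarith

theorem convex_edom_rateFn_s2 [IsProbabilityMeasure μ] : Convex ℝ (edom (rateFn μ)) := by
  intro v hv w hw a b ha hb hab
  exact mem_edom_of_rateFn_le
    (rate_combo_le (coe_toReal_rateFn hv).ge (coe_toReal_rateFn hw).ge ha hb hab)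

/-- Jensen's inequality for the tilted law: its mean is a subgradient of `K` at `u`, also when `u` is
a boundary point of the domain or `μ` is not a probability measure. -/
theorem cumulant_add_inner_tiltedMean_le [NeZero μ] {u w : EuclideanSpace ℝ (Fin d)}
    (hu : u ∈ expDom μ) (hw : w ∈ expDom μ)
    (hi : Integrable (fun x => Real.exp ⟪u, x⟫ • x) μ) :
    cumulant μ u + ⟪w - u, tiltedMean μ u⟫ ≤ cumulant μ w := by
  have hZ := integral_exp_inner_pos hu
  set Z := ∫ x, Real.exp ⟪u, x⟫ ∂μ with hZdef
  set s := ⟪w - u, tiltedMean μ u⟫ with hs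
  have hZs : ∫ x, Real.exp ⟪u, x⟫ * ⟪w - u, x⟫ ∂μ = Z * s := by
    have h1 := integral_inner (𝕜 := ℝ) hi (w - u)
    simp only [real_inner_smul_right] at h1
    rw [h1, hs, tiltedMean, real_inner_smul_right, ← hZdef, mul_inv_cancel_left₀ hZ.ne']
  have hi' : Integrable (fun x => Real.exp ⟪u, x⟫ * ⟪w - u, x⟫) μ := by
    have := hi.const_inner (𝕜 := ℝ) (w - u)
    simpa only [real_inner_smul_right] using this
  have hle : Z * Real.exp s ≤ ∫ x, Real.exp ⟪w, x⟫ ∂μ := by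
    have hint : Integrable (fun x => Real.exp s * ((1 - s) * Real.exp ⟪u, x⟫ +
      Real.exp ⟪u, x⟫ * ⟪w - u, x⟫)) μ := ((hu.const_mul (1 - s)).add hi').const_mul _
    have := integral_mono hint hw (fun x => ?_)
    · rw [integral_const_mul, integral_add (hu.const_mul (1 - s)) hi', integral_const_mul, hZs,
        ← hZdef] at this
      refine le_of_eq_of_le (by ring) this
    · have h1 := Real.add_one_le_exp (⟪w - u, x⟫ - s)
      have h2 : Real.exp ⟪w, x⟫ =
          Real.exp s * (Real.exp ⟪u, x⟫ * Real.exp (⟪w - u, x⟫ - s)) := by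
        rw [← Real.exp_add, ← Real.exp_add, inner_sub_left]; congr 1; ring
      simp only [h2]
      have h3 := mul_le_mul_of_nonneg_left h1 (Real.exp_pos ⟪u, x⟫).le
      exact mul_le_mul_of_nonneg_left (by linarith) (Real.exp_pos s).le
  have := Real.log_le_log (by positivity) hle
  rwa [Real.log_mul hZ.ne' (Real.exp_pos s).ne', Real.log_exp] at this

/-- Fatou's lemma for nonnegative Bochner-integrable functions, with integrability of the limit as part
of the conclusion. -/
theorem fatou_integrable {α : Type*} [MeasurableSpace α] {ν : Measure α} {f : ℕ → α → ℝ}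
    {g : α → ℝ} {c : ℕ → ℝ} {a : ℝ} (hf : ∀ n, Integrable (f n) ν) (hf0 : ∀ n x, 0 ≤ f n x)
    (hg : AEStronglyMeasurable g ν) (hfg : ∀ x, Tendsto (fun n => f n x) atTop (𝓝 (g x)))
    (hle : ∀ n, ∫ x, f n x ∂ν ≤ c n) (hc : Tendsto c atTop (𝓝 a)) :
    Integrable g ν ∧ ∫ x, g x ∂ν ≤ a := by
  have hg0 : ∀ x, 0 ≤ g x := fun x => ge_of_tendsto' (hfg x) fun n => hf0 n x
  have ha0 : 0 ≤ a := ge_of_tendsto' hc fun n => (integral_nonneg (hf0 n)).trans (hle n)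
  have key : ∫⁻ x, ENNReal.ofReal (g x) ∂ν ≤ ENNReal.ofReal a := by
    calc ∫⁻ x, ENNReal.ofReal (g x) ∂ν
        = ∫⁻ x, liminf (fun n => ENNReal.ofReal (f n x)) atTop ∂ν := by
          refine lintegral_congr fun x => ?_
          exact ((ENNReal.tendsto_ofReal (hfg x)).liminf_eq).symm
      _ ≤ liminf (fun n => ∫⁻ x, ENNReal.ofReal (f n x) ∂ν) atTop :=
          lintegral_liminf_le' fun n => (hf n).1.aemeasurable.ennreal_ofReal
      _ ≤ liminf (fun n => ENNReal.ofReal (c n)) atTop := by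
          refine liminf_le_liminf (Eventually.of_forall fun n => ?_)
          rw [← ofReal_integral_eq_lintegral_ofReal (hf n) (Eventually.of_forall (hf0 n))]
          exact ENNReal.ofReal_le_ofReal (hle n)
      _ = ENNReal.ofReal a := (ENNReal.tendsto_ofReal hc).liminf_eq
  have hint : Integrable g ν := by
    refine ⟨hg, ?_⟩
    rw [hasFiniteIntegral_iff_ofReal (Eventually.of_forall hg0)]
    exact lt_of_le_of_lt key ENNReal.ofReal_lt_top
  refine ⟨hint, ?_⟩
  rw [← ofReal_integral_eq_lintegral_ofReal hint (Eventually.of_forall hg0)] at key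
  exact (ENNReal.ofReal_le_ofReal_iff ha0).1 key

end Laplace

/-! ### Restriction to bounded sets, semicontinuity and biconjugation -/

section Truncation
variable {d : ℕ} {μ : Measure (EuclideanSpace ℝ (Fin d))}

/-- Tilted means of `μ` restricted to a bounded set lie in the effective domain of the rate function,
since `K` dominates the logarithmic Laplace transform of the restriction. -/
theorem rateFn_tiltedMean_restrict_le [IsProbabilityMeasure μ]
    {A : Set (EuclideanSpace ℝ (Fin d))} {R : ℝ} (hAR : A ⊆ Metric.closedBall 0 R)
    (hA0 : μ A ≠ 0) (u : EuclideanSpace ℝ (Fin d)) :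
    rateFn μ (tiltedMean (μ.restrict A) u) ≤
      ((⟪u, tiltedMean (μ.restrict A) u⟫ - cumulant (μ.restrict A) u : ℝ) : EReal) := by
  have hcont : ∀ {G : Type} [NormedAddCommGroup G] {f : EuclideanSpace ℝ (Fin d) → G},
      Continuous f → Integrable f (μ.restrict A) := fun hf =>
    (hf.locallyIntegrable.integrableOn_isCompact (isCompact_closedBall 0 R)).mono_set hAR
  have : NeZero (μ.restrict A) := ⟨by simpa [Measure.restrict_eq_zero] using hA0⟩
  rw [rateFn_le_iff]
  intro w hw
  have h1 := cumulant_add_inner_tiltedMean_le (μ := μ.restrict A) (u := u) (w := w)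
    (hcont (by fun_prop)) (hcont (by fun_prop)) (hcont (by fun_prop))
  have hwA : w ∈ expDom (μ.restrict A) := hcont (by fun_prop)
  have h2 : cumulant (μ.restrict A) w ≤ cumulant μ w :=
    Real.log_le_log (integral_exp_inner_pos hwA)
      (setIntegral_le_integral hw (Eventually.of_forall fun x => (Real.exp_pos _).le))
  rw [inner_sub_left] at h1
  linarith

/-- Closed half-spaces containing `D(I)` have full measure: otherwise the mean of `μ` restricted to a
bounded part of the complement would be a point of `D(I)` outside the half-space. -/
theorem ae_inner_le_of_edom [IsProbabilityMeasure μ] {h : EuclideanSpace ℝ (Fin d)} {b : ℝ}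
    (hb : ∀ y ∈ edom (rateFn μ), ⟪h, y⟫ ≤ b) : ∀ᵐ x ∂μ, ⟪h, x⟫ ≤ b := by
  by_contra hcon
  have hcon' : μ (⋃ n : ℕ, {x | b < ⟪h, x⟫} ∩ Metric.closedBall 0 n) ≠ 0 := by
    rw [← inter_iUnion, Metric.iUnion_closedBall_nat, inter_univ]
    rw [ae_iff] at hcon
    simpa only [not_le] using hcon
  obtain ⟨n, hn⟩ : ∃ n : ℕ, μ ({x | b < ⟪h, x⟫} ∩ Metric.closedBall 0 n) ≠ 0 := by
    by_contra! hall
    exact hcon' (measure_iUnion_null hall)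
  set A := {x | b < ⟪h, x⟫} ∩ Metric.closedBall (0 : EuclideanSpace ℝ (Fin d)) n with hA
  have hAm : MeasurableSet A :=
    (measurableSet_lt measurable_const (by fun_prop)).inter measurableSet_closedBall
  have hcont : ∀ {G : Type} [NormedAddCommGroup G] {f : EuclideanSpace ℝ (Fin d) → G},
      Continuous f → Integrable f (μ.restrict A) := fun hf =>
    (hf.locallyIntegrable.integrableOn_isCompact (isCompact_closedBall 0 n)).mono_set
      inter_subset_right
  have : NeZero (μ.restrict A) := ⟨by simpa [Measure.restrict_eq_zero] using hn⟩
  have hy := hb _ (mem_edom_of_rateFn_le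
    (rateFn_tiltedMean_restrict_le (A := A) inter_subset_right hn 0))
  have hZ := integral_exp_inner_pos (μ := μ.restrict A) (u := 0) (hcont (by fun_prop))
  have hpos : 0 < ∫ x in A, (⟪h, x⟫ - b) ∂μ := by
    rw [setIntegral_pos_iff_support_of_nonneg_ae]
    · refine lt_of_lt_of_le (pos_iff_ne_zero.2 hn) (measure_mono fun x hx => ⟨?_, hx⟩)
      exact (sub_pos.2 hx.1).ne'
    · exact (ae_restrict_iff' hAm).2 (Eventually.of_forall fun x hx => (sub_pos.2 hx.1).le)
    · exact hcont (by fun_prop)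
  have hinner : ∫ x in A, ⟪h, x⟫ ∂μ = ⟪h, ∫ x in A, x ∂μ⟫ :=
    integral_inner (𝕜 := ℝ) (hcont continuous_id) h
  rw [integral_sub (hcont (by fun_prop)) (hcont (by fun_prop)), hinner] at hpos
  rw [tiltedMean, real_inner_smul_right, inv_mul_le_iff₀ hZ] at hy
  simp at hy hpos
  linarith

theorem edom_rateFn_nonempty [IsProbabilityMeasure μ] : (edom (rateFn μ)).Nonempty := by
  by_contra hcon
  rw [not_nonempty_iff_eq_empty] at hcon
  have := ae_inner_le_of_edom (μ := μ) (h := 0) (b := -1) (by simp [hcon])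
  simp at this
  exact absurd this (by norm_num)

/-- Lower semicontinuity of `K` along sequences, including finiteness of `K` at the limit point. -/
theorem cumulant_lsc [NeZero μ] {u : ℕ → EuclideanSpace ℝ (Fin d)} {u₀ : EuclideanSpace ℝ (Fin d)}
    {c : ℕ → ℝ} {a : ℝ} (hu : ∀ n, u n ∈ expDom μ) (hlim : Tendsto u atTop (𝓝 u₀))
    (hle : ∀ n, cumulant μ (u n) ≤ c n) (hc : Tendsto c atTop (𝓝 a)) :
    u₀ ∈ expDom μ ∧ cumulant μ u₀ ≤ a := by
  have := fatou_integrable (ν := μ) (f := fun n x => Real.exp ⟪u n, x⟫)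
    (g := fun x => Real.exp ⟪u₀, x⟫) (c := fun n => Real.exp (c n)) (a := Real.exp a)
    hu (fun n x => (Real.exp_pos _).le) (measurable_exp_inner _).aestronglyMeasurable
    (fun x => (Real.continuous_exp.tendsto _).comp (hlim.inner tendsto_const_nhds))
    (fun n => (Real.log_le_iff_le_exp (integral_exp_inner_pos (hu n))).1 (hle n))
    ((Real.continuous_exp.tendsto _).comp hc)
  exact ⟨this.1, (Real.log_le_iff_le_exp (integral_exp_inner_pos this.1)).2 this.2⟩

/-- The inequality `K ≤ I*`: restricting `μ` to balls gives points of `D(I)` at which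
`⟪u, w⟫ - I w` is at least the logarithmic Laplace transform of the restriction, and the radius then
tends to infinity. -/
theorem cumulant_le_of_forall [IsProbabilityMeasure μ] {u : EuclideanSpace ℝ (Fin d)} {c : ℝ}
    (h : ∀ w ∈ edom (rateFn μ), ⟪u, w⟫ - (rateFn μ w).toReal ≤ c) :
    u ∈ expDom μ ∧ cumulant μ u ≤ c := by
  have hball : ∀ n : ℕ,
      ∫ x in Metric.closedBall 0 (n : ℝ), Real.exp ⟪u, x⟫ ∂μ ≤ Real.exp c := by
    intro n
    set A := Metric.closedBall (0 : EuclideanSpace ℝ (Fin d)) (n : ℝ)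
    by_cases hA : μ A = 0
    · rw [Measure.restrict_eq_zero.2 hA, integral_zero_measure]; positivity
    · have h1 := rateFn_tiltedMean_restrict_le (μ := μ) (A := A) subset_rfl hA u
      have h2 := mem_edom_of_rateFn_le h1
      rw [← coe_toReal_rateFn h2, EReal.coe_le_coe_iff] at h1
      have h3 := h _ h2
      have : NeZero (μ.restrict A) := ⟨by simpa [Measure.restrict_eq_zero] using hA⟩
      refine (Real.log_le_iff_le_exp (integral_exp_inner_pos ?_)).1
        (show cumulant (μ.restrict A) u ≤ c by linarith)
      exact (Continuous.locallyIntegrable (by fun_prop)).integrableOn_isCompact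
        (isCompact_closedBall 0 _)
  have := fatou_integrable (ν := μ)
    (f := fun n : ℕ => (Metric.closedBall 0 (n : ℝ)).indicator fun x => Real.exp ⟪u, x⟫)
    (g := fun x => Real.exp ⟪u, x⟫) (c := fun _ => Real.exp c) (a := Real.exp c)
    (fun n => by
      rw [integrable_indicator_iff measurableSet_closedBall]
      exact (Continuous.locallyIntegrable (by fun_prop)).integrableOn_isCompact
        (isCompact_closedBall 0 _))
    (fun n x => indicator_nonneg (fun _ _ => (Real.exp_pos _).le) x)
    (measurable_exp_inner _).aestronglyMeasurable
    (fun x => by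
      refine tendsto_const_nhds.congr' ?_
      filter_upwards [eventually_ge_atTop ⌈‖x‖⌉₊] with n hn
      rw [indicator_of_mem]
      simpa using (Nat.ceil_le.1 hn))
    (fun n => by rw [integral_indicator measurableSet_closedBall]; exact hball n)
    tendsto_const_nhds
  exact ⟨this.1, (Real.log_le_iff_le_exp (integral_exp_inner_pos this.1)).2 this.2⟩

end Truncation

/-! ### Differentiability in the interior of the domain -/

section Differentiability
variable {d : ℕ} {μ : Measure (EuclideanSpace ℝ (Fin d))}

theorem exp_norm_le_sum (hd : 1 ≤ d) {c : ℝ} (hc : 0 ≤ c) (x : EuclideanSpace ℝ (Fin d)) :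
    Real.exp (c / d * ‖x‖) ≤ ∑ i, (Real.exp (c * x i) + Real.exp (-(c * x i))) := by
  have : Nonempty (Fin d) := ⟨⟨0, hd⟩⟩
  obtain ⟨i, -, hi⟩ := Finset.exists_max_image Finset.univ (fun j => |x j|) Finset.univ_nonempty
  have hd' : (1 : ℝ) ≤ d := by exact_mod_cast hd
  have hnorm : ‖x‖ ≤ d * |x i| := by
    refine abs_le_of_sq_le_sq' ?_ (by positivity) |>.2
    rw [EuclideanSpace.norm_sq_eq]
    calc ∑ j, ‖x j‖ ^ 2 ≤ ∑ _j : Fin d, |x i| ^ 2 :=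
          Finset.sum_le_sum fun j hj => by
            rw [Real.norm_eq_abs]; exact pow_le_pow_left₀ (abs_nonneg _) (hi j hj) 2
      _ = d * |x i| ^ 2 := by simp
      _ ≤ (d * |x i|) ^ 2 := by nlinarith [sq_nonneg (|x i|)]
  have h1 : c / d * ‖x‖ ≤ c * |x i| := by
    calc c / d * ‖x‖ ≤ c / d * (d * |x i|) := by gcongr
      _ = c * |x i| := by field_simp
  have h2 : Real.exp (c * |x i|) ≤ Real.exp (c * x i) + Real.exp (-(c * x i)) := by
    rcases abs_cases (x i) with ⟨h, -⟩ | ⟨h, -⟩ <;> rw [h]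
    · linarith [Real.exp_pos (-(c * x i))]
    · rw [mul_neg]; linarith [Real.exp_pos (c * x i)]
  calc _ ≤ Real.exp (c * |x i|) := Real.exp_le_exp.2 h1
    _ ≤ _ := h2
    _ ≤ _ := Finset.single_le_sum (f := fun i => Real.exp (c * x i) + Real.exp (-(c * x i)))
        (fun j _ => by positivity) (Finset.mem_univ i)

/-- Near an interior point of the domain, the derivatives of `w ↦ exp ⟪w, x⟫` have a common integrable
bound. -/
theorem exists_dominating (hd : 1 ≤ d) {u : EuclideanSpace ℝ (Fin d)}
    (hu : u ∈ interior (expDom μ)) :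
    ∃ ε > (0 : ℝ), ∃ B : EuclideanSpace ℝ (Fin d) → ℝ, Integrable B μ ∧
      ∀ x, ∀ w ∈ Metric.ball u ε, Real.exp ⟪w, x⟫ * ‖x‖ ≤ B x := by
  rw [mem_interior_iff_mem_nhds, Metric.mem_nhds_iff] at hu
  obtain ⟨r, hr, hball⟩ := hu
  have hd' : (1 : ℝ) ≤ d := by exact_mod_cast hd
  set c := r / 2 with hc
  have hc0 : 0 < c := by positivity
  set ε := c / d / 2 with hε
  have hε0 : 0 < ε := by positivity
  set e : Fin d → EuclideanSpace ℝ (Fin d) := fun i => EuclideanSpace.single i (1 : ℝ) with he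
  have hmem : ∀ (i : Fin d) (s : ℝ), |s| = c → u + s • e i ∈ expDom μ := by
    intro i s hs
    refine hball ?_
    simp only [Metric.mem_ball, dist_self_add_left, norm_smul, Real.norm_eq_abs, hs, he]
    simp; linarith
  have hB : Integrable (fun x => ∑ i, (Real.exp ⟪u + c • e i, x⟫ +
      Real.exp ⟪u + (-c) • e i, x⟫)) μ :=
    integrable_finsetSum _ fun i _ => (hmem i c (abs_of_pos hc0)).add
      (hmem i (-c) (by rw [abs_neg, abs_of_pos hc0]))
  refine ⟨ε, hε0, fun x => ε⁻¹ * _, hB.const_mul ε⁻¹, fun x w hw => ?_⟩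
  have h1 : Real.exp ⟪w, x⟫ ≤ Real.exp ⟪u, x⟫ * Real.exp (ε * ‖x‖) := by
    rw [← Real.exp_add, Real.exp_le_exp]
    have h2 : ⟪w, x⟫ = ⟪u, x⟫ + ⟪w - u, x⟫ := by rw [inner_sub_left]; ring
    have h3 := real_inner_le_norm (w - u) x
    have h4 : ‖w - u‖ ≤ ε := by rw [← dist_eq_norm]; exact (Metric.mem_ball.1 hw).le
    have := mul_le_mul_of_nonneg_right h4 (norm_nonneg x)
    linarith
  have h2 : ‖x‖ ≤ ε⁻¹ * Real.exp (ε * ‖x‖) := by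
    rw [le_inv_mul_iff₀ hε0]
    linarith [Real.add_one_le_exp (ε * ‖x‖)]
  have h3 := exp_norm_le_sum hd hc0.le x
  have h4 : Real.exp (c / d * ‖x‖) = Real.exp (ε * ‖x‖) * Real.exp (ε * ‖x‖) := by
    rw [← Real.exp_add]; congr 1; rw [hε]; ring
  have h5 : ∑ i, (Real.exp ⟪u + c • e i, x⟫ + Real.exp ⟪u + (-c) • e i, x⟫) =
      Real.exp ⟪u, x⟫ * ∑ i, (Real.exp (c * x i) + Real.exp (-(c * x i))) := by
    rw [Finset.mul_sum]
    refine Finset.sum_congr rfl fun i _ => ?_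
    rw [mul_add, ← Real.exp_add, ← Real.exp_add]
    simp [he, inner_add_left, real_inner_smul_left, EuclideanSpace.inner_single_left]
  simp only [h5]
  calc Real.exp ⟪w, x⟫ * ‖x‖
      ≤ (Real.exp ⟪u, x⟫ * Real.exp (ε * ‖x‖)) * (ε⁻¹ * Real.exp (ε * ‖x‖)) := by gcongr
    _ = ε⁻¹ * (Real.exp ⟪u, x⟫ * (Real.exp (ε * ‖x‖) * Real.exp (ε * ‖x‖))) := by ring
    _ ≤ _ := by rw [← h4]; gcongr

theorem integrable_exp_smul (hd : 1 ≤ d) {u : EuclideanSpace ℝ (Fin d)}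
    (hu : u ∈ interior (expDom μ)) : Integrable (fun x => Real.exp ⟪u, x⟫ • x) μ := by
  obtain ⟨ε, hε, B, hB, h⟩ := exists_dominating hd hu
  refine hB.mono' (by fun_prop) (Eventually.of_forall fun x => ?_)
  rw [norm_smul, Real.norm_of_nonneg (Real.exp_pos _).le]
  exact h x u (Metric.mem_ball_self hε)

theorem hasGradientAt_cumulant [NeZero μ] (hd : 1 ≤ d) {u : EuclideanSpace ℝ (Fin d)}
    (hu : u ∈ interior (expDom μ)) : HasGradientAt (cumulant μ) (tiltedMean μ u) u := by
  obtain ⟨ε, hε, B, hB, h⟩ := exists_dominating hd hu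
  have hi := integrable_exp_smul hd hu
  have hu' := interior_subset hu
  have hF := hasFDerivAt_integral_of_dominated_of_fderiv_le (𝕜 := ℝ) (μ := μ) (x₀ := u)
    (F := fun w x => Real.exp ⟪w, x⟫)
    (F' := fun w x => Real.exp ⟪w, x⟫ • innerSL ℝ x) (bound := B)
    (Metric.ball_mem_nhds u hε)
    (Eventually.of_forall fun w => (measurable_exp_inner w).aestronglyMeasurable) hu'
    (by fun_prop)
    (Eventually.of_forall fun x w hw => by
      rw [norm_smul, Real.norm_of_nonneg (Real.exp_pos _).le, innerSL_apply_norm]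
      exact h x w hw)
    hB
    (Eventually.of_forall fun x w hw => by
      have h1 : HasFDerivAt (fun w => ⟪w, x⟫) (innerSL ℝ x) w := by
        convert (innerSL ℝ x).hasFDerivAt using 1
        funext w; simp [real_inner_comm]
      exact h1.exp)
  rw [hasGradientAt_iff_hasFDerivAt]
  have hlog := hF.log (integral_exp_inner_pos hu').ne'
  have hi2 : Integrable (fun x => Real.exp ⟪u, x⟫ • innerSL ℝ x) μ := by
    refine hi.norm.mono' (by fun_prop) (Eventually.of_forall fun x => ?_)
    simp only [norm_smul, innerSL_apply_norm]; exact le_rfl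
  refine hlog.congr_fderiv ?_
  ext1 y
  have h3 := integral_inner (𝕜 := ℝ) hi y
  simp only [real_inner_smul_right] at h3
  rw [InnerProductSpace.toDual_apply_apply, smul_apply,
    ContinuousLinearMap.integral_apply hi2, tiltedMean, real_inner_smul_left, smul_eq_mul,
    real_inner_comm, ← h3]
  congr 1
  refine integral_congr_ae (Eventually.of_forall fun x => ?_)
  simp [real_inner_comm]

/-- At an interior point, the gradient is the only subgradient. -/
theorem eq_of_subgradient {x y : EuclideanSpace ℝ (Fin d)} {f : EuclideanSpace ℝ (Fin d) → ℝ}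
    {D : Set (EuclideanSpace ℝ (Fin d))} {u : EuclideanSpace ℝ (Fin d)} (hu : u ∈ interior D)
    (hf : HasGradientAt f y u) (hx : ∀ w ∈ D, f u + ⟪w - u, x⟫ ≤ f w) : x = y := by
  have hx' : HasFDerivAt (fun w => ⟪w, x⟫) (innerSL ℝ x) u := by
    convert (innerSL ℝ x).hasFDerivAt using 1
    funext w; simp [real_inner_comm]
  have hmin : IsLocalMin (fun w => f w - ⟪w, x⟫) u := by
    filter_upwards [mem_interior_iff_mem_nhds.1 hu] with w hw
    have := hx w hw
    rw [inner_sub_left] at this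
    linarith
  have h0 := hmin.hasFDerivAt_eq_zero (hf.hasFDerivAt.sub hx')
  have := congrArg (fun L => L (y - x)) h0
  simp only [sub_apply, InnerProductSpace.toDual_apply_apply,
    innerSL_apply_apply, zero_apply] at this
  rw [← inner_sub_left, inner_self_eq_zero, sub_eq_zero] at this
  exact this.symm
end Differentiability

/-! ### Subgradients and tilted means -/

section Boundary
variable {d : ℕ} {μ : Measure (EuclideanSpace ℝ (Fin d))}

theorem tendsto_mul_exp_div_sub_one (s : ℝ) :
    Tendsto (fun n : ℕ => ((n : ℝ) + 1) * (Real.exp (s * (1 / ((n : ℝ) + 1))) - 1)) atTop (𝓝 s) := by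
  have h : HasDerivAt (fun t : ℝ => Real.exp (s * t)) s 0 := by
    have h1 : HasDerivAt (fun t : ℝ => s * t) s 0 := by
      simpa using (hasDerivAt_id (0 : ℝ)).const_mul s
    simpa using h1.exp
  have ht : Tendsto (fun n : ℕ => 1 / ((n : ℝ) + 1)) atTop (𝓝[≠] 0) :=
    tendsto_nhdsWithin_iff.2 ⟨tendsto_one_div_add_atTop_nhds_zero_nat,
      Eventually.of_forall fun n => by
        have : (0 : ℝ) < 1 / ((n : ℝ) + 1) := by positivity
        exact this.ne'⟩
  have := h.tendsto_slope_zero.comp ht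
  simpa [Function.comp_def] using this

/-- If `K` has a subgradient at `u`, possibly a boundary point, then `⟪w - u, x⟫` is integrable under the
law tilted by `u`. The difference quotients of `t ↦ exp ⟪u + t (w - u), x⟫` lie below
`exp ⟪w, x⟫ - exp ⟪u, x⟫` by convexity, and the subgradient bounds their integrals from below, so
Fatou's lemma applies to the difference. -/
theorem integrable_exp_mul_inner [NeZero μ] {u v w : EuclideanSpace ℝ (Fin d)}
    (hu : u ∈ expDom μ) (hw : w ∈ expDom μ)
    (hv : ∀ w ∈ expDom μ, cumulant μ u + ⟪w - u, v⟫ ≤ cumulant μ w) :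
    Integrable (fun x => Real.exp ⟪u, x⟫ * ⟪w - u, x⟫) μ := by
  set t : ℕ → ℝ := fun n => 1 / ((n : ℝ) + 1) with ht
  have ht0 : ∀ n, 0 < t n := fun n => by simp only [ht]; positivity
  have ht1 : ∀ n, t n ≤ 1 := fun n => by
    simp only [ht]; rw [div_le_one (by positivity)]; linarith [n.cast_nonneg (α := ℝ)]
  have htn : ∀ n : ℕ, ((n : ℝ) + 1) * t n = 1 := fun n => by
    simp only [ht]; field_simp
  set p : ℕ → EuclideanSpace ℝ (Fin d) := fun n => (1 - t n) • u + t n • w with hp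
  have hpD : ∀ n, p n ∈ expDom μ := fun n =>
    convex_expDom hu hw (by linarith [ht1 n]) (ht0 n).le (by ring)
  have hpu : ∀ n, p n - u = t n • (w - u) := fun n => by simp only [hp]; module
  have hpx : ∀ n x, ⟪p n, x⟫ = ⟪u, x⟫ + ⟪w - u, x⟫ * t n := fun n x => by
    have : p n = u + t n • (w - u) := by rw [← hpu]; abel
    rw [this, inner_add_left, real_inner_smul_left, mul_comm]
  have hZ := integral_exp_inner_pos hu
  set Z := ∫ x, Real.exp ⟪u, x⟫ ∂μ with hZdef
  -- the difference quotients of the exponential decrease to the derivative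
  have hfat := fatou_integrable (ν := μ)
    (f := fun n x => Real.exp ⟪w, x⟫ - Real.exp ⟪u, x⟫ -
      ((n : ℝ) + 1) * (Real.exp ⟪p n, x⟫ - Real.exp ⟪u, x⟫))
    (g := fun x => Real.exp ⟪w, x⟫ - Real.exp ⟪u, x⟫ - Real.exp ⟪u, x⟫ * ⟪w - u, x⟫)
    (c := fun _ => (∫ x, Real.exp ⟪w, x⟫ ∂μ) - Z - Z * ⟪w - u, v⟫)
    (fun n => (hw.sub hu).sub (((hpD n).sub hu).const_mul _))
    (fun n x => by
      have h1 := convexOn_exp.2 (mem_univ ⟪u, x⟫) (mem_univ ⟪w, x⟫)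
        (show 0 ≤ 1 - t n by linarith [ht1 n]) (ht0 n).le (by ring)
      have h2 : ⟪p n, x⟫ = (1 - t n) • ⟪u, x⟫ + t n • ⟪w, x⟫ := by
        simp only [hp, inner_add_left, real_inner_smul_left, smul_eq_mul]
      rw [← h2, smul_eq_mul, smul_eq_mul] at h1
      have h3 := mul_le_mul_of_nonneg_left h1 (show (0 : ℝ) ≤ (n : ℝ) + 1 by positivity)
      have h4 : ((n : ℝ) + 1) * ((1 - t n) * Real.exp ⟪u, x⟫ + t n * Real.exp ⟪w, x⟫) =
          ((n : ℝ) + 1) * Real.exp ⟪u, x⟫ + (((n : ℝ) + 1) * t n) *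
            (Real.exp ⟪w, x⟫ - Real.exp ⟪u, x⟫) := by ring
      rw [h4, htn] at h3
      linarith)
    (by fun_prop)
    (fun x => by
      refine tendsto_const_nhds.sub ?_
      have := (tendsto_mul_exp_div_sub_one ⟪w - u, x⟫).const_mul (Real.exp ⟪u, x⟫)
      refine this.congr fun n => ?_
      rw [hpx, Real.exp_add]
      ring)
    (fun n => by
      have hi1 : Integrable (fun x => ((n : ℝ) + 1) * (Real.exp ⟪p n, x⟫ - Real.exp ⟪u, x⟫)) μ :=
        ((hpD n).sub hu).const_mul _
      have hi2 : Integrable (fun x => Real.exp ⟪w, x⟫ - Real.exp ⟪u, x⟫) μ := hw.sub hu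
      rw [integral_sub hi2 hi1, integral_sub hw hu, integral_const_mul,
        integral_sub (hpD n) hu, ← hZdef]
      have h1 := hv _ (hpD n)
      rw [hpu, real_inner_smul_left] at h1
      have h2 : Z * (1 + t n * ⟪w - u, v⟫) ≤ ∫ x, Real.exp ⟪p n, x⟫ ∂μ := by
        have h3 := Real.exp_le_exp.2 h1
        rw [Real.exp_add, cumulant, cumulant, Real.exp_log hZ,
          Real.exp_log (integral_exp_inner_pos (hpD n))] at h3
        have h4 := mul_le_mul_of_nonneg_left (Real.add_one_le_exp (t n * ⟪w - u, v⟫)) hZ.le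
        linarith
      have h5 := mul_le_mul_of_nonneg_left h2 (show (0 : ℝ) ≤ (n : ℝ) + 1 by positivity)
      have h6 : ((n : ℝ) + 1) * (Z * (1 + t n * ⟪w - u, v⟫)) =
          ((n : ℝ) + 1) * Z + (((n : ℝ) + 1) * t n) * (Z * ⟪w - u, v⟫) := by ring
      rw [h6, htn] at h5
      linarith)
    tendsto_const_nhds
  have := (hw.sub hu).sub hfat.1
  refine this.congr (Eventually.of_forall fun x => ?_)
  simp

/-- When the domain has an interior point, the differences `w - u` with `w` in the domain span the whole
space, so the coordinate functions are integrable under the tilted law. -/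
theorem integrable_exp_smul_of_subgradient [NeZero μ] {u v : EuclideanSpace ℝ (Fin d)}
    (hne : (interior (expDom μ)).Nonempty) (hu : u ∈ expDom μ)
    (hv : ∀ w ∈ expDom μ, cumulant μ u + ⟪w - u, v⟫ ≤ cumulant μ w) :
    Integrable (fun x => Real.exp ⟪u, x⟫ • x) μ := by
  obtain ⟨w, hw⟩ := hne
  rw [mem_interior_iff_mem_nhds, Metric.mem_nhds_iff] at hw
  obtain ⟨r, hr, hball⟩ := hw
  have hcoord : ∀ i, Integrable (fun x : EuclideanSpace ℝ (Fin d) => Real.exp ⟪u, x⟫ * x i) μ := by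
    intro i
    set e : EuclideanSpace ℝ (Fin d) := EuclideanSpace.single i (1 : ℝ) with he
    have hmem : w + (r / 2) • e ∈ expDom μ := by
      refine hball ?_
      simp only [Metric.mem_ball, dist_self_add_left, norm_smul, Real.norm_eq_abs, he,
        abs_of_pos (half_pos hr)]
      simp; linarith
    have h1 := (integrable_exp_mul_inner hu hmem hv).sub
      (integrable_exp_mul_inner hu (hball (Metric.mem_ball_self hr)) hv)
    refine (h1.const_mul (2 / r)).congr (Eventually.of_forall fun x => ?_)
    have h2 : ⟪e, x⟫ = x i := by simp [he, EuclideanSpace.inner_single_left]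
    simp only [Pi.sub_apply, inner_sub_left, inner_add_left, real_inner_smul_left, h2]
    field_simp
    ring
  have hsum := integrable_finsetSum Finset.univ fun i _ =>
    (hcoord i).smul_const (EuclideanSpace.basisFun (Fin d) ℝ i)
  refine hsum.congr (Eventually.of_forall fun x => ?_)
  simp only [← smul_smul, ← Finset.smul_sum]
  congr 1
  simpa using (EuclideanSpace.basisFun (Fin d) ℝ).sum_repr x

theorem rateFn_eq_of_subgradient [NeZero μ] {u y : EuclideanSpace ℝ (Fin d)} (hu : u ∈ expDom μ)
    (hy : ∀ w ∈ expDom μ, cumulant μ u + ⟪w - u, y⟫ ≤ cumulant μ w) :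
    rateFn μ y = ((⟪u, y⟫ - cumulant μ u : ℝ) : EReal) := by
  refine le_antisymm (rateFn_le_iff.2 fun w hw => ?_) ?_
  · have := hy w hw
    rw [inner_sub_left] at this
    linarith
  · refine le_of_eq_of_le ?_ (le_iSup _ u)
    rw [logLaplace_eq_coe hu, EReal.coe_sub]

theorem exists_inner_eq (f : EuclideanSpace ℝ (Fin d) →L[ℝ] ℝ) :
    ∃ h : EuclideanSpace ℝ (Fin d), ∀ y, f y = ⟪h, y⟫ :=
  ⟨(InnerProductSpace.toDual ℝ _).symm f, fun y => by simp⟩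

/-- The tilted mean lies in `rint D(I)`. Otherwise a nonconstant functional supports `D(I)` at the mean
`m`; it is at most its mean value almost surely, hence constant almost surely. Then `K` is linear along
the line it spans, which forces the functional to be constant on `D(I)`. -/
theorem tiltedMean_mem_rint [IsProbabilityMeasure μ] {u : EuclideanSpace ℝ (Fin d)}
    (hu : u ∈ expDom μ) (hi : Integrable (fun x => Real.exp ⟪u, x⟫ • x) μ) :
    tiltedMean μ u ∈ intrinsicInterior ℝ (edom (rateFn μ)) := by
  set m := tiltedMean μ u with hm
  have hmD : m ∈ edom (rateFn μ) := mem_edom_of_rateFn_le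
    (rateFn_eq_of_subgradient hu fun w hw => cumulant_add_inner_tiltedMean_le hu hw hi).le
  by_contra hcon
  obtain ⟨f, hf, y, hy, hlt⟩ := exists_proper_support convex_edom_rateFn_s2 hmD hcon
  obtain ⟨h, hfh⟩ := exists_inner_eq f
  simp only [hfh] at hf hlt
  have hae := ae_inner_le_of_edom hf
  have hZ := integral_exp_inner_pos hu
  have hi' : Integrable (fun x => Real.exp ⟪u, x⟫ * ⟪h, x⟫) μ := by
    have := hi.const_inner (𝕜 := ℝ) h
    simpa only [real_inner_smul_right] using this
  have hint : Integrable (fun x => Real.exp ⟪u, x⟫ * ⟪h, m⟫ - Real.exp ⟪u, x⟫ * ⟪h, x⟫) μ :=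
    (hu.mul_const _).sub hi'
  have hzero : ∫ x, (Real.exp ⟪u, x⟫ * ⟪h, m⟫ - Real.exp ⟪u, x⟫ * ⟪h, x⟫) ∂μ = 0 := by
    have h1 := integral_inner (𝕜 := ℝ) hi h
    simp only [real_inner_smul_right] at h1
    rw [integral_sub (hu.mul_const _) hi', h1, integral_mul_const, hm, tiltedMean,
      real_inner_smul_right, mul_inv_cancel_left₀ hZ.ne', sub_self]
  rw [integral_eq_zero_iff_of_nonneg_ae ?_ hint] at hzero
  swap
  · filter_upwards [hae] with x hx
    have := mul_le_mul_of_nonneg_left hx (Real.exp_pos ⟪u, x⟫).le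
    simpa using this
  have heq : ∀ᵐ x ∂μ, ⟪h, x⟫ = ⟪h, m⟫ := by
    filter_upwards [hzero] with x hx
    have h1 : Real.exp ⟪u, x⟫ * (⟪h, m⟫ - ⟪h, x⟫) = 0 := by
      rw [mul_sub]; simpa using hx
    have := (mul_eq_zero.1 h1).resolve_left (Real.exp_pos _).ne'
    linarith
  have hexp : ∀ t : ℝ, (fun x => Real.exp ⟪t • h, x⟫) =ᵐ[μ] fun _ => Real.exp (t * ⟪h, m⟫) := by
    intro t
    filter_upwards [heq] with x hx
    rw [real_inner_smul_left, hx]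
  have hDt : ∀ t : ℝ, t • h ∈ expDom μ := fun t =>
    (integrable_const _).congr (hexp t).symm
  have hkt : ∀ t : ℝ, cumulant μ (t • h) = t * ⟪h, m⟫ := fun t => by
    rw [cumulant, integral_congr_ae (hexp t)]; simp
  have hgap : 0 < ⟪h, m⟫ - ⟪h, y⟫ := by linarith
  -- This multiple of `h` makes the lower bound for `I y` exceed `I y`.
  have hbd := inner_sub_cumulant_le hy
    (hDt (-(((rateFn μ y).toReal + 1) / (⟪h, m⟫ - ⟪h, y⟫))))
  rw [hkt, real_inner_smul_left] at hbd
  have : ((rateFn μ y).toReal + 1) / (⟪h, m⟫ - ⟪h, y⟫) * (⟪h, m⟫ - ⟪h, y⟫) =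
      (rateFn μ y).toReal + 1 := div_mul_cancel₀ _ hgap.ne'
  nlinarith

/-- The rate function has a subgradient at each point of `rint D(I)`, obtained from a supporting
functional of its epigraph; the relative interior hypothesis excludes vertical ones. -/
theorem exists_subgradient_rateFn [IsProbabilityMeasure μ] {z : EuclideanSpace ℝ (Fin d)}
    (hz : z ∈ intrinsicInterior ℝ (edom (rateFn μ))) :
    ∃ u : EuclideanSpace ℝ (Fin d), ∀ w ∈ edom (rateFn μ),
      (rateFn μ z).toReal + ⟪u, w - z⟫ ≤ (rateFn μ w).toReal := by
  have hzD := intrinsicInterior_subset hz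
  set C : Set (EuclideanSpace ℝ (Fin d) × ℝ) := {p | rateFn μ p.1 ≤ (p.2 : EReal)} with hC
  have hCc : Convex ℝ C := fun p hp q hq a b ha hb hab => rate_combo_le hp hq ha hb hab
  set c := (rateFn μ z).toReal with hc
  have hmem : ∀ w ∈ edom (rateFn μ), ∀ s : ℝ, (rateFn μ w).toReal ≤ s → (w, s) ∈ C := by
    intro w hw s hs
    change rateFn μ w ≤ (s : EReal)
    rw [← coe_toReal_rateFn hw]
    exact_mod_cast hs
  have hnot : (z, c) ∉ intrinsicInterior ℝ C := by
    intro hcon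
    obtain ⟨ε, hε, h⟩ := exists_prolong_of_mem_rint hcon
      (hmem z hzD (c + 1) (by linarith))
    have h' : rateFn μ (z + ε • (z - z)) ≤ ((c + ε • (c - (c + 1)) : ℝ) : EReal) := h
    rw [sub_self, smul_zero, add_zero, ← coe_toReal_rateFn hzD, EReal.coe_le_coe_iff,
      smul_eq_mul] at h'
    linarith
  obtain ⟨f, hf, ⟨y, s⟩, hy, hlt⟩ := exists_proper_support hCc (hmem z hzD c le_rfl) hnot
  obtain ⟨h, hfh⟩ := exists_inner_eq (f.comp (ContinuousLinearMap.inl ℝ _ ℝ))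
  set β := f (0, 1) with hβ
  have hfe : ∀ y s, f (y, s) = ⟪h, y⟫ + s * β := by
    intro y s
    rw [← hfh, hβ, ← smul_eq_mul, ← map_smul, ContinuousLinearMap.comp_apply, ← map_add]
    simp
  have hβ0 : β ≤ 0 := by
    have := hf _ (hmem z hzD (c + 1) (by linarith))
    rw [hfe, hfe] at this
    linarith
  -- A vertical supporting hyperplane would be constant on `D(I)`, hence on the epigraph.
  have hβ1 : β ≠ 0 := by
    intro h0
    have hyD : y ∈ edom (rateFn μ) := mem_edom_of_rateFn_le hy
    have := eq_of_le_of_mem_rint hz (innerSL ℝ h) (fun w hw => by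
      have := hf _ (hmem w hw _ le_rfl)
      rw [hfe, hfe, h0] at this
      simpa using this) hyD
    rw [hfe, hfe, h0] at hlt
    simp at this hlt
    linarith
  have hβ2 : 0 < -β := by
    have := lt_of_le_of_ne hβ0 hβ1
    linarith
  refine ⟨(-β)⁻¹ • h, fun w hw => ?_⟩
  have h1 := hf _ (hmem w hw _ le_rfl)
  rw [hfe, hfe] at h1
  rw [real_inner_smul_left, inner_sub_right]
  have h2 : (-β)⁻¹ * (⟪h, w⟫ - ⟪h, z⟫) ≤ (rateFn μ w).toReal - c := by
    rw [inv_mul_le_iff₀ hβ2]; linarith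
  linarith
end Boundary

/-! ### The two implications -/

section Main
variable {d : ℕ} {μ : Measure (EuclideanSpace ℝ (Fin d))}

/-- A domain without interior points lies in a hyperplane through `0`. -/
theorem exists_orthogonal_expDom [IsProbabilityMeasure μ] (h : ¬(interior (expDom μ)).Nonempty) :
    ∃ l : EuclideanSpace ℝ (Fin d), l ≠ 0 ∧ ∀ u ∈ expDom μ, ⟪u, l⟫ = 0 := by
  have h0 := zero_mem_expDom (μ := μ)
  have hspan : Submodule.span ℝ (expDom μ) ≠ ⊤ := by
    intro htop
    apply h
    rw [convex_expDom.interior_nonempty_iff_affineSpan_eq_top,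
      AffineSubspace.affineSpan_eq_top_iff_vectorSpan_eq_top_of_nonempty ℝ _ _ ⟨0, h0⟩,
      vectorSpan_eq_span_vsub_set_right ℝ h0]
    simpa using htop
  have hbot : (Submodule.span ℝ (expDom μ))ᗮ ≠ ⊥ := fun hb =>
    hspan (Submodule.orthogonal_eq_bot_iff.1 hb)
  obtain ⟨l, hl, hl0⟩ := Submodule.exists_mem_ne_zero_of_ne_bot hbot
  exact ⟨l, hl0, fun u hu => (Submodule.mem_orthogonal _ _).1 hl u (Submodule.subset_span hu)⟩

/-- An affine formula for the rate function along a ray issuing from the relative interior of its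
effective domain contradicts strict convexity there. -/
theorem not_strictlyConvexOnSet_of_ray [IsProbabilityMeasure μ]
    {x l u : EuclideanSpace ℝ (Fin d)} {c : ℝ} (hl : l ≠ 0)
    (hx : x ∈ intrinsicInterior ℝ (edom (rateFn μ)))
    (hray : ∀ t : ℝ, 0 ≤ t → rateFn μ (x + t • l) = ((⟪u, x + t • l⟫ - c : ℝ) : EReal)) :
    ¬StrictlyConvexOnSet (rateFn μ) (intrinsicInterior ℝ (edom (rateFn μ))) := by
  intro hs
  refine hs x (x + l) ?_ (by simpa using hl) ?_
  · rw [segment_eq_image']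
    rintro _ ⟨t, ht, rfl⟩
    simp only [add_sub_cancel_left]
    exact add_smul_mem_rint convex_edom_rateFn_s2 hx (mem_edom_of_rateFn_le (hray 2 (by norm_num)).le) ht
  · intro t ht
    have h0 := hray 0 le_rfl
    have h1 := hray 1 zero_le_one
    have ht' := hray t ht.1
    rw [zero_smul, add_zero] at h0
    rw [one_smul] at h1
    have : (1 - t) • x + t • (x + l) = x + t • l := by module
    rw [this, ht', h0, h1, ← EReal.coe_mul, ← EReal.coe_mul, ← EReal.coe_add]
    congr 1
    simp only [inner_add_right, real_inner_smul_right]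
    ring

theorem interior_nonempty_of_strictlyConvex [IsProbabilityMeasure μ]
    (hs : StrictlyConvexOnSet (rateFn μ) (intrinsicInterior ℝ (edom (rateFn μ)))) :
    (interior (expDom μ)).Nonempty := by
  by_contra hcon
  obtain ⟨l, hl0, hl⟩ := exists_orthogonal_expDom hcon
  obtain ⟨x, hx⟩ := Set.Nonempty.intrinsicInterior (convex_edom_rateFn_s2 (μ := μ)) edom_rateFn_nonempty
  have hxD := intrinsicInterior_subset hx
  refine not_strictlyConvexOnSet_of_ray (u := 0) (c := -(rateFn μ x).toReal) hl0 hx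
    (fun t _ => ?_) hs
  rw [inner_zero_left, zero_sub, neg_neg, coe_toReal_rateFn hxD]
  unfold rateFn
  refine iSup_congr fun u => ?_
  by_cases hu : u ∈ expDom μ
  · rw [inner_add_right, real_inner_smul_right, hl u hu, mul_zero, add_zero]
  · rw [logLaplace_eq_top hu, EReal.sub_top, EReal.sub_top]

theorem steep_of_strictlyConvex [IsProbabilityMeasure μ] (hd : 1 ≤ d)
    (hs : StrictlyConvexOnSet (rateFn μ) (intrinsicInterior ℝ (edom (rateFn μ)))) : Steep μ := by
  have hne := interior_nonempty_of_strictlyConvex hs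
  intro p u hp hpu hu
  rw [toReal_logLaplace]
  rw [edom_logLaplace] at hp hu
  by_contra hcon
  rw [tendsto_atTop] at hcon
  push Not at hcon
  obtain ⟨B, hB⟩ := hcon
  obtain ⟨φ, hφ, hφB⟩ := extraction_of_frequently_atTop hB
  obtain ⟨v, -, ψ, hψ, hv⟩ := tendsto_subseq_of_bounded (Metric.isBounded_ball (x := 0) (r := B))
    (x := fun n => gradient (cumulant μ) (p (φ n))) (fun n => by simpa using hφB n)
  set q : ℕ → EuclideanSpace ℝ (Fin d) := fun n => p (φ (ψ n)) with hq
  have hqD : ∀ n, q n ∈ interior (expDom μ) := fun n => hp _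
  have hqu : Tendsto q atTop (𝓝 u) := hpu.comp (hφ.comp hψ).tendsto_atTop
  have hqv : Tendsto (fun n => tiltedMean μ (q n)) atTop (𝓝 v) :=
    hv.congr fun n => (hasGradientAt_cumulant hd (hqD n)).gradient
  -- the limit of the gradients is a subgradient at the boundary point
  have hsub : ∀ w ∈ expDom μ, u ∈ expDom μ ∧ cumulant μ u ≤ cumulant μ w - ⟪w - u, v⟫ :=
    fun w hw => cumulant_lsc (fun n => interior_subset (hqD n)) hqu
      (fun n => le_sub_iff_add_le.2 (cumulant_add_inner_tiltedMean_le
        (interior_subset (hqD n)) hw (integrable_exp_smul hd (hqD n))))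
      (tendsto_const_nhds.sub ((tendsto_const_nhds.sub hqu).inner hqv))
  have huD : u ∈ expDom μ := (hsub 0 zero_mem_expDom).1
  have hi := integrable_exp_smul_of_subgradient hne huD
    (fun w hw => le_sub_iff_add_le.1 (hsub w hw).2)
  obtain ⟨f, hf, hf'⟩ := exists_support_of_notMem_interior convex_expDom hne hu.2
  obtain ⟨l, hl⟩ := exists_inner_eq f
  have hl0 : l ≠ 0 := by
    rintro rfl
    obtain ⟨w, hw⟩ := hne
    have := hf' w hw
    simp [hl] at this
  refine not_strictlyConvexOnSet_of_ray hl0 (tiltedMean_mem_rint huD hi) (fun t ht => ?_) hs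
    (u := u) (c := cumulant μ u)
  refine rateFn_eq_of_subgradient huD fun w hw => ?_
  have h1 := cumulant_add_inner_tiltedMean_le huD hw hi
  have h2 := hf w hw
  rw [hl, hl, real_inner_comm, real_inner_comm u] at h2
  rw [inner_add_right, real_inner_smul_right, inner_sub_left w u l]
  nlinarith

/-- If `K` is steep, it has no subgradient at boundary points of its domain. Along the segment from `u` to
an interior point `w`, monotonicity of subgradients bounds `⟪w - u, ∇K⟫` from below by
`⟪w - u, v⟫`; testing the gradient inequality on a small ball around `w` then bounds `‖∇K‖`. -/
theorem mem_interior_of_subgradient [IsProbabilityMeasure μ] (hd : 1 ≤ d)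
    (hne : (interior (expDom μ)).Nonempty) (hst : Steep μ) {u v : EuclideanSpace ℝ (Fin d)}
    (hu : u ∈ expDom μ)
    (hv : ∀ w ∈ expDom μ, cumulant μ u + ⟪w - u, v⟫ ≤ cumulant μ w) :
    u ∈ interior (expDom μ) := by
  by_contra hcon
  obtain ⟨w, hw⟩ := hne
  set t : ℕ → ℝ := fun n => 1 / ((n : ℝ) + 1) with ht
  have ht0 : ∀ n, 0 < t n := fun n => by simp only [ht]; positivity
  have ht1 : ∀ n, t n ≤ 1 := fun n => by
    simp only [ht]; rw [div_le_one (by positivity)]; linarith [n.cast_nonneg (α := ℝ)]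
  have htlim : Tendsto t atTop (𝓝 0) := tendsto_one_div_add_atTop_nhds_zero_nat
  set p : ℕ → EuclideanSpace ℝ (Fin d) := fun n => u + t n • (w - u) with hp
  have hpD : ∀ n, p n ∈ interior (expDom μ) := fun n =>
    convex_expDom.add_smul_sub_mem_interior hu hw ⟨ht0 n, ht1 n⟩
  have hplim : Tendsto p atTop (𝓝 u) := by
    simpa using (tendsto_const_nhds (x := u)).add (htlim.smul_const (w - u))
  have hgrad := hst p u (by rwa [edom_logLaplace]) hplim
    (by rw [edom_logLaplace]; exact ⟨subset_closure hu, hcon⟩)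
  rw [toReal_logLaplace] at hgrad
  have hcontw := (hasGradientAt_cumulant hd hw).differentiableAt.continuousAt
  obtain ⟨r, hr, hball⟩ := Metric.mem_nhds_iff.1 (Filter.inter_mem
    (mem_interior_iff_mem_nhds.1 hw)
    (hcontw.eventually_lt continuousAt_const (lt_add_one (cumulant μ w))))
  set M := cumulant μ w + 1 - cumulant μ u + 2 * |⟪w - u, v⟫| with hM
  have hbound : ∀ n, ‖gradient (cumulant μ) (p n)‖ ≤ M / (r / 2) := by
    intro n
    rw [(hasGradientAt_cumulant hd (hpD n)).gradient]
    set g := tiltedMean μ (p n) with hg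
    have hsub : ∀ y ∈ expDom μ, cumulant μ (p n) + ⟪y - p n, g⟫ ≤ cumulant μ y := fun y hy =>
      cumulant_add_inner_tiltedMean_le (interior_subset (hpD n)) hy (integrable_exp_smul hd (hpD n))
    have h1 := hv _ (interior_subset (hpD n))
    have h2 := hsub u hu
    have e1 : p n - u = t n • (w - u) := by simp [hp]
    have e2 : u - p n = -(t n • (w - u)) := by simp [hp]
    rw [e1, real_inner_smul_left] at h1
    rw [e2, inner_neg_left, real_inner_smul_left] at h2
    have h3 : ⟪w - u, v⟫ ≤ ⟪w - u, g⟫ := le_of_mul_le_mul_left (by linarith) (ht0 n)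
    -- The test point is `w` moved by `r / 2` in the direction of the gradient `g`.
    have hnorm : ‖(r / 2) • (‖g‖⁻¹ • g)‖ < r := by
      rw [norm_smul, norm_smul, norm_inv, norm_norm, Real.norm_of_nonneg (by positivity)]
      have : ‖g‖⁻¹ * ‖g‖ ≤ 1 := inv_mul_le_one
      nlinarith
    have hy := hball (show w + (r / 2) • (‖g‖⁻¹ • g) ∈ Metric.ball w r by simpa using hnorm)
    have h4 := hsub _ hy.1
    have hy2 : cumulant μ (w + (r / 2) • (‖g‖⁻¹ • g)) < cumulant μ w + 1 := hy.2
    have e3 : w + (r / 2) • (‖g‖⁻¹ • g) - p n =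
        (1 - t n) • (w - u) + (r / 2) • (‖g‖⁻¹ • g) := by simp only [hp]; module
    have e4 : ‖g‖⁻¹ * (‖g‖ * ‖g‖) = ‖g‖ := by
      rcases eq_or_ne ‖g‖ 0 with h | h
      · simp [h]
      · rw [inv_mul_cancel_left₀ h]
    rw [e3, inner_add_left, real_inner_smul_left, real_inner_smul_left, real_inner_smul_left,
      real_inner_self_eq_norm_mul_norm, e4] at h4
    rw [le_div_iff₀ (by positivity)]
    have h5 := mul_le_mul_of_nonneg_left h3 (sub_nonneg.2 (ht1 n))
    have h6 : |(1 - t n) * ⟪w - u, v⟫| ≤ |⟪w - u, v⟫| := by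
      rw [abs_mul, abs_of_nonneg (sub_nonneg.2 (ht1 n))]
      nlinarith [abs_nonneg ⟪w - u, v⟫, ht0 n]
    have h7 : |t n * ⟪w - u, v⟫| ≤ |⟪w - u, v⟫| := by
      rw [abs_mul, abs_of_nonneg (ht0 n).le]
      nlinarith [abs_nonneg ⟪w - u, v⟫, ht1 n]
    have h8 := (abs_le.1 h6).1
    have h9 := (abs_le.1 h7).1
    rw [hM]
    linarith
  obtain ⟨n, hn⟩ := (hgrad.eventually (eventually_gt_atTop (M / (r / 2)))).exists
  exact absurd hn (not_lt.2 (hbound n))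

theorem strictlyConvex_of_steep [IsProbabilityMeasure μ] (hd : 1 ≤ d)
    (hne : (interior (expDom μ)).Nonempty) (hst : Steep μ) :
    StrictlyConvexOnSet (rateFn μ) (intrinsicInterior ℝ (edom (rateFn μ))) := by
  intro x y hxy hne' haff
  have hxD := intrinsicInterior_subset (hxy (left_mem_segment ℝ x y))
  have hyD := intrinsicInterior_subset (hxy (right_mem_segment ℝ x y))
  set z := (1 - (1 / 2 : ℝ)) • x + (1 / 2 : ℝ) • y with hz
  have hzr := hxy (show z ∈ segment ℝ x y from
    ⟨1 - 1 / 2, 1 / 2, by norm_num, by norm_num, by norm_num, rfl⟩)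
  have hzD := intrinsicInterior_subset hzr
  have hmid := haff (1 / 2) ⟨by norm_num, by norm_num⟩
  rw [← hz, ← coe_toReal_rateFn hxD, ← coe_toReal_rateFn hyD, ← coe_toReal_rateFn hzD,
    ← EReal.coe_mul, ← EReal.coe_mul, ← EReal.coe_add, EReal.coe_eq_coe_iff] at hmid
  obtain ⟨u, hu⟩ := exists_subgradient_rateFn hzr
  obtain ⟨huD, hku⟩ := cumulant_le_of_forall (μ := μ) (u := u)
    (c := ⟪u, z⟫ - (rateFn μ z).toReal) (fun w hw => by
      have := hu w hw
      rw [inner_sub_right] at this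
      linarith)
  have hx1 := hu x hxD
  have hy1 := hu y hyD
  have hzin : ⟪u, z⟫ = (1 - 1 / 2) * ⟪u, x⟫ + 1 / 2 * ⟪u, y⟫ := by
    rw [hz, inner_add_right, real_inner_smul_right, real_inner_smul_right]
  rw [inner_sub_right, hzin] at hx1 hy1
  rw [hzin] at hku
  have hsx : ∀ w ∈ expDom μ, cumulant μ u + ⟪w - u, x⟫ ≤ cumulant μ w := fun w hw => by
    have := inner_sub_cumulant_le hxD hw
    rw [inner_sub_left]; linarith
  have hsy : ∀ w ∈ expDom μ, cumulant μ u + ⟪w - u, y⟫ ≤ cumulant μ w := fun w hw => by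
    have := inner_sub_cumulant_le hyD hw
    rw [inner_sub_left]; linarith
  have huI := mem_interior_of_subgradient hd hne hst huD hsx
  have hg := hasGradientAt_cumulant hd huI
  exact hne' ((eq_of_subgradient huI hg hsx).trans (eq_of_subgradient huI hg hsy).symm)
end Main

/-- **Proposition 1(2).** `I_X` is strictly convex on `rint D(I_X)` iff `int D(K_X) ≠ ∅`
and `K_X` is steep. -/
theorem strictlyConvexOn_rint_iff_steep {d : ℕ} (hd : 1 ≤ d)
    (μ : Measure (EuclideanSpace ℝ (Fin d))) [IsProbabilityMeasure μ] :
    StrictlyConvexOnSet (rateFn μ) (intrinsicInterior ℝ (edom (rateFn μ))) ↔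
      (interior (edom (logLaplace μ))).Nonempty ∧ Steep μ := by
  rw [edom_logLaplace]
  exact ⟨fun h => ⟨interior_nonempty_of_strictlyConvex h, steep_of_strictlyConvex hd h⟩,
    fun h => strictlyConvex_of_steep hd h.1 h.2⟩

end
end
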